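/- arXiv:2406.06268 — 2 statements merged into one kernel-verified Lean document; each statement's English description precedes it below -/
import Mathlib

section
/- Let q₀ ∈ (1, ∞), let N ≥ 1 be a real number, let 1 < p < ∞ and 1 ≤ q < ∞, and suppose that either p < q₀ or q > q₀' (where p' = p/(p−1) and q₀' = q₀/(q₀−1)). Let U : (0,∞) → [0,∞) be non-increasing and V : (0,∞) → (0,∞) be non-decreasing. If sup_{s>0} (∫₀^{1/s} U(t)^q t^{N−1} dt)^{1/q} · (∫₀^{s} V(t)^{−p'} t^{N−1} dt)^{1/p'} < ∞, then sup_{s>0} (∫_{1/s}^{∞} U(t)^q t^{−Nq/q₀' + N − 1} dt)^{1/q} · (∫_{s}^{∞} V(t)^{−p'} t^{−Np'/q₀' + N − 1} dt)^{1/p'} < ∞. -/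
open MeasureTheory Set ENNReal

/-!
Suppose that the weight `G = V ^ (-p')` is non-increasing and `q₀' < p'`. Averages of `G` against
`t ^ (N - 1) dt` decrease, so `∫₀ˢ G ≤ (s / x) ^ N ∫₀ˣ G` for `x ≤ s`; hence the local condition at
the point `x` still controls the local integral of `F = U ^ q` up to `1 / x` against that of `G` up
to the larger radius `s`, at the cost of a power of `s / x`. Cutting `(1 / s, ∞)` dyadically bounds
the tail of `F` by a sum of such local integrals, which is geometric with ratio
`2 ^ (N * q / p' - N * q / q₀') < 1`. The tail of `G` beyond `s` is at most a power of `s` times its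
local integral up to `s`, and the two powers of `s` cancel. The case `q₀' < q` is the same with `U`
and `V` exchanged and `s` replaced by `1 / s`.
-/

variable {N α β : ℝ} {F G : ℝ → ℝ≥0∞}

/-- The integral of `F` over `(0, x)` against the radial density `t ^ (N - 1) dt` of an
`N`-dimensional space; `N` need not be an integer. -/
noncomputable def radialMass (N : ℝ) (F : ℝ → ℝ≥0∞) (x : ℝ) : ℝ≥0∞ :=
  ∫⁻ t in Ioo 0 x, F t * ENNReal.ofReal (t ^ (N - 1))

/-- The integral of `F` over `(x, ∞)` against `t ^ (-α)` times the radial density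
`t ^ (N - 1) dt`. The exponent is kept as the single power `t ^ (-α + N - 1)`. -/
noncomputable def radialTail (N α : ℝ) (F : ℝ → ℝ≥0∞) (x : ℝ) : ℝ≥0∞ :=
  ∫⁻ t in Ioi x, F t * ENNReal.ofReal (t ^ (-α + N - 1))

/-- The two-weight condition of Muckenhoupt type
`sup_{s > 0} A(1 / s) ^ (1 / q) * B(s) ^ (1 / r) < ∞`, for functions `A`, `B` giving the masses of
the two weights. The finite bound is encoded as `ENNReal.ofReal M`. -/
def MuckenhouptCondition (q r : ℝ) (A B : ℝ → ℝ≥0∞) : Prop :=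
  ∃ M : ℝ, ∀ s : ℝ, 0 < s → A (1 / s) ^ (1 / q) * B s ^ (1 / r) ≤ ENNReal.ofReal M

lemma MuckenhouptCondition.symm {q r : ℝ} {A B : ℝ → ℝ≥0∞} (h : MuckenhouptCondition q r A B) :
    MuckenhouptCondition r q B A := by
  obtain ⟨M, hM⟩ := h
  refine ⟨M, fun s hs => ?_⟩
  have := hM (1 / s) (by positivity)
  rwa [one_div_one_div, mul_comm] at this

lemma muckenhouptCondition_iff {q r : ℝ} (hq : 0 < q) {A B : ℝ → ℝ≥0∞} :
    MuckenhouptCondition q r A B ↔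
      ∃ C ≠ ∞, ∀ s : ℝ, 0 < s → A (1 / s) * B s ^ (q / r) ≤ C := by
  have root (s : ℝ) :
      A (1 / s) ^ (1 / q) * B s ^ (1 / r) = (A (1 / s) * B s ^ (q / r)) ^ q⁻¹ := by
    rw [ENNReal.mul_rpow_of_nonneg _ _ (by positivity), ← ENNReal.rpow_mul, one_div q,
      div_mul_eq_mul_div, mul_inv_cancel₀ hq.ne']
  simp only [MuckenhouptCondition, root, ENNReal.rpow_inv_le_iff hq]
  constructor
  · rintro ⟨M, hM⟩
    exact ⟨ENNReal.ofReal M ^ q, ENNReal.rpow_ne_top_of_nonneg hq.le ENNReal.ofReal_ne_top, hM⟩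
  · rintro ⟨C, hC, hbound⟩
    have hroot : C ^ q⁻¹ ≠ ∞ := ENNReal.rpow_ne_top_of_nonneg (by positivity) hC
    exact ⟨(C ^ q⁻¹).toReal, by
      simpa only [ENNReal.ofReal_toReal hroot, ENNReal.rpow_inv_rpow hq.ne'] using hbound⟩

lemma lintegral_Ioo_rpow_sub_one (hN : 0 < N) {x : ℝ} (hx : 0 ≤ x) :
    ∫⁻ t in Ioo 0 x, ENNReal.ofReal (t ^ (N - 1)) = ENNReal.ofReal (x ^ N / N) := by
  have hint : IntegrableOn (fun t : ℝ => t ^ (N - 1)) (Ioo 0 x) :=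
    (intervalIntegrable_iff_integrableOn_Ioo_of_le hx).1
      (intervalIntegral.intervalIntegrable_rpow' (by linarith))
  rw [← ofReal_integral_eq_lintegral_ofReal hint, ← integral_Ioc_eq_integral_Ioo,
    ← intervalIntegral.integral_of_le hx, integral_rpow (Or.inl (by linarith)), sub_add_cancel,
    Real.zero_rpow hN.ne', sub_zero]
  filter_upwards [ae_restrict_mem measurableSet_Ioo] with t ht
  exact Real.rpow_nonneg ht.1.le _

lemma lintegral_Ioi_rpow_neg_sub_one {e x : ℝ} (he : 0 < e) (hx : 0 < x) :
    ∫⁻ t in Ioi x, ENNReal.ofReal (t ^ (-e - 1)) = ENNReal.ofReal (x ^ (-e) / e) := by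
  rw [← ofReal_integral_eq_lintegral_ofReal (integrableOn_Ioi_rpow_of_lt (by linarith) hx),
    integral_Ioi_rpow_of_lt (by linarith) hx, sub_add_cancel, neg_div_neg_eq]
  filter_upwards [ae_restrict_mem measurableSet_Ioi] with t ht
  exact Real.rpow_nonneg (hx.trans ht).le _

lemma mul_ofReal_le_radialMass (hN : 0 < N) (hG : AntitoneOn G (Ioi 0)) {x : ℝ} (hx : 0 < x) :
    G x * ENNReal.ofReal (x ^ N / N) ≤ radialMass N G x := by
  rw [← lintegral_Ioo_rpow_sub_one hN hx.le, ← lintegral_const_mul _ (by fun_prop)]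
  refine setLIntegral_mono' measurableSet_Ioo fun t ht => ?_
  gcongr
  exact hG ht.1 hx ht.2.le

lemma radialMass_mul_le (hG : AntitoneOn G (Ioi 0)) {c : ℝ} (hc : 1 ≤ c) (x : ℝ) :
    radialMass N G (c * x) ≤ ENNReal.ofReal (c ^ N) * radialMass N G x := by
  have hc₀ : 0 < c := by linarith
  have dilation : Ioo 0 (c * x) = (c * ·) '' Ioo 0 x := by
    rw [image_mul_left_Ioo hc₀, mul_zero]
  have hderiv (t : ℝ) : HasDerivWithinAt (c * ·) c (Ioo 0 x) t := by
    simpa using (hasDerivWithinAt_id t _).const_mul c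
  rw [radialMass, radialMass, dilation,
    lintegral_image_eq_lintegral_abs_deriv_mul measurableSet_Ioo (fun t _ => hderiv t)
      (mul_right_injective₀ hc₀.ne').injOn,
    ← lintegral_const_mul' _ _ ENNReal.ofReal_ne_top]
  refine setLIntegral_mono' measurableSet_Ioo fun t ht => ?_
  have hjac : |c| * (c * t) ^ (N - 1) = c ^ N * t ^ (N - 1) := by
    rw [abs_of_pos hc₀, Real.mul_rpow hc₀.le ht.1.le, ← mul_assoc, Real.rpow_sub_one hc₀.ne',
      mul_div_cancel₀ _ hc₀.ne']
  calc ENNReal.ofReal |c| * (G (c * t) * ENNReal.ofReal ((c * t) ^ (N - 1)))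
      = G (c * t) * ENNReal.ofReal (c ^ N * t ^ (N - 1)) := by
        rw [mul_left_comm, ← ENNReal.ofReal_mul (abs_nonneg c), hjac]
    _ ≤ G t * ENNReal.ofReal (c ^ N * t ^ (N - 1)) := by
        gcongr
        exact hG ht.1 (mul_pos hc₀ ht.1) (le_mul_of_one_le_left ht.1.le hc)
    _ = ENNReal.ofReal (c ^ N) * (G t * ENNReal.ofReal (t ^ (N - 1))) := by
        rw [ENNReal.ofReal_mul (by positivity), mul_left_comm]

lemma radialTail_le_mul_radialMass (hN : 0 < N) (hα : N < α) (hG : AntitoneOn G (Ioi 0)) {s : ℝ}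
    (hs : 0 < s) :
    radialTail N α G s ≤ ENNReal.ofReal (N / (α - N) * s ^ (-α)) * radialMass N G s := by
  have hαN : 0 < α - N := sub_pos.2 hα
  have hconst : s ^ (-(α - N)) / (α - N) = N / (α - N) * s ^ (-α) * (s ^ N / N) := by
    rw [show -(α - N) = -α + N by ring, Real.rpow_add hs]
    field_simp
  calc radialTail N α G s
      ≤ ∫⁻ t in Ioi s, G s * ENNReal.ofReal (t ^ (-(α - N) - 1)) := by
        rw [radialTail, show -α + N - 1 = -(α - N) - 1 by ring]
        refine setLIntegral_mono' measurableSet_Ioi fun t ht => ?_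
        gcongr
        exact hG hs (hs.trans ht) (le_of_lt ht)
    _ = ENNReal.ofReal (N / (α - N) * s ^ (-α)) * (G s * ENNReal.ofReal (s ^ N / N)) := by
        rw [lintegral_const_mul _ (by fun_prop), lintegral_Ioi_rpow_neg_sub_one hαN hs, hconst,
          ENNReal.ofReal_mul (by positivity), mul_left_comm]
    _ ≤ ENNReal.ofReal (N / (α - N) * s ^ (-α)) * radialMass N G s := by
        gcongr
        exact mul_ofReal_le_radialMass hN hG hs

lemma setLIntegral_Ico_mul_rpow_le_mul_radialMass (hα : 0 ≤ α) {y z : ℝ} (hy : 0 < y) :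
    ∫⁻ t in Ico y z, F t * ENNReal.ofReal (t ^ (-α + N - 1)) ≤
      ENNReal.ofReal (y ^ (-α)) * radialMass N F z := by
  rw [radialMass, ← lintegral_const_mul' _ _ ENNReal.ofReal_ne_top]
  calc ∫⁻ t in Ico y z, F t * ENNReal.ofReal (t ^ (-α + N - 1))
      ≤ ∫⁻ t in Ico y z, ENNReal.ofReal (y ^ (-α)) * (F t * ENNReal.ofReal (t ^ (N - 1))) := by
        refine setLIntegral_mono' measurableSet_Ico fun t ht => ?_
        have ht₀ : 0 < t := hy.trans_le ht.1
        have hle : t ^ (-α) ≤ y ^ (-α) := Real.rpow_le_rpow_of_nonpos hy ht.1 (by linarith)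
        rw [mul_left_comm, ← ENNReal.ofReal_mul (by positivity), add_sub_assoc, Real.rpow_add ht₀]
        gcongr
    _ ≤ ∫⁻ t in Ioo 0 z, ENNReal.ofReal (y ^ (-α)) * (F t * ENNReal.ofReal (t ^ (N - 1))) :=
        lintegral_mono_set fun t ht => ⟨hy.trans_le ht.1, ht.2⟩

lemma Ioi_subset_iUnion_Ico_two_pow_mul {x : ℝ} (hx : 0 < x) :
    Ioi x ⊆ ⋃ k : ℕ, Ico (2 ^ k * x) (2 ^ (k + 1) * x) := by
  intro t ht
  obtain ⟨k, hk, hk'⟩ := exists_nat_pow_near ((one_le_div hx).2 (le_of_lt ht)) one_lt_two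
  exact mem_iUnion.2 ⟨k, (le_div_iff₀ hx).1 hk, (div_lt_iff₀ hx).1 hk'⟩

lemma radialTail_le_tsum_radialMass (hα : 0 ≤ α) {x : ℝ} (hx : 0 < x) :
    radialTail N α F x ≤
      ∑' k : ℕ, ENNReal.ofReal ((2 ^ k * x) ^ (-α)) * radialMass N F (2 ^ (k + 1) * x) :=
  (lintegral_mono_set (Ioi_subset_iUnion_Ico_two_pow_mul hx)).trans <|
    (lintegral_iUnion_le _ _).trans <|
      ENNReal.tsum_le_tsum fun _ => setLIntegral_Ico_mul_rpow_le_mul_radialMass hα (by positivity)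

lemma tsum_ofReal_mul_geometric {a ρ : ℝ} (ha : 0 ≤ a) (hρ : 0 ≤ ρ) (hρ' : ρ < 1) :
    ∑' k : ℕ, ENNReal.ofReal (a * ρ ^ k) = ENNReal.ofReal (a / (1 - ρ)) := by
  rw [← ENNReal.ofReal_tsum_of_nonneg (fun k => by positivity)
    ((summable_geometric_of_lt_one hρ hρ').mul_left a), tsum_mul_left,
    tsum_geometric_of_lt_one hρ hρ', div_eq_mul_inv]

section LocalBound

variable {L : ℝ≥0∞}

lemma radialMass_div_mul_rpow_le (hβ : 0 ≤ β) (hG : AntitoneOn G (Ioi 0))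
    (hloc : ∀ s : ℝ, 0 < s → radialMass N F (1 / s) * radialMass N G s ^ β ≤ L)
    {c s : ℝ} (hc : 1 ≤ c) (hs : 0 < s) :
    radialMass N F (c / s) * radialMass N G s ^ β ≤ ENNReal.ofReal (c ^ (N * β)) * L := by
  have hc₀ : 0 < c := by linarith
  have hgrowth : radialMass N G s ≤ ENNReal.ofReal (c ^ N) * radialMass N G (s / c) := by
    simpa only [mul_div_cancel₀ s hc₀.ne'] using radialMass_mul_le hG hc (s / c)
  calc radialMass N F (c / s) * radialMass N G s ^ β
      ≤ radialMass N F (c / s) * (ENNReal.ofReal (c ^ N) * radialMass N G (s / c)) ^ β := by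
        gcongr
    _ = ENNReal.ofReal (c ^ (N * β)) *
          (radialMass N F (1 / (s / c)) * radialMass N G (s / c) ^ β) := by
        rw [ENNReal.mul_rpow_of_nonneg _ _ hβ, ENNReal.ofReal_rpow_of_nonneg (by positivity) hβ,
          ← Real.rpow_mul hc₀.le, one_div_div, mul_left_comm]
    _ ≤ ENNReal.ofReal (c ^ (N * β)) * L := by
        gcongr _ * ?_
        exact hloc _ (by positivity)

lemma radialTail_mul_radialMass_rpow_le (hα : 0 ≤ α) (hβ : 0 ≤ β) (hαβ : N * β < α)
    (hG : AntitoneOn G (Ioi 0))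
    (hloc : ∀ s : ℝ, 0 < s → radialMass N F (1 / s) * radialMass N G s ^ β ≤ L)
    {s : ℝ} (hs : 0 < s) :
    radialTail N α F (1 / s) * radialMass N G s ^ β ≤
      ENNReal.ofReal (s ^ α * 2 ^ (N * β) / (1 - 2 ^ (N * β - α))) * L := by
  have hratio : (2 : ℝ) ^ (N * β - α) < 1 :=
    Real.rpow_lt_one_of_one_lt_of_neg one_lt_two (sub_neg.2 hαβ)
  have hpow (k : ℕ) : (2 ^ k * (1 / s)) ^ (-α) * (2 ^ (k + 1)) ^ (N * β) =
      s ^ α * 2 ^ (N * β) * (2 ^ (N * β - α)) ^ k := by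
    rw [Real.mul_rpow (by positivity) (by positivity), one_div, Real.inv_rpow hs.le,
      Real.rpow_neg hs.le, inv_inv, pow_succ, Real.mul_rpow (by positivity) (by positivity),
      ← Real.rpow_pow_comm zero_le_two, ← Real.rpow_pow_comm zero_le_two, sub_eq_add_neg,
      Real.rpow_add two_pos, mul_pow]
    ring
  have hterm (k : ℕ) :
      ENNReal.ofReal ((2 ^ k * (1 / s)) ^ (-α)) * radialMass N F (2 ^ (k + 1) * (1 / s)) *
        radialMass N G s ^ β ≤
      ENNReal.ofReal (s ^ α * 2 ^ (N * β) * (2 ^ (N * β - α)) ^ k) * L := by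
    rw [← hpow, ENNReal.ofReal_mul (by positivity), mul_assoc, mul_assoc, mul_one_div (2 ^ (k + 1))]
    gcongr _ * ?_
    exact radialMass_div_mul_rpow_le hβ hG hloc (one_le_pow₀ one_le_two) hs
  calc radialTail N α F (1 / s) * radialMass N G s ^ β
      ≤ (∑' k : ℕ, ENNReal.ofReal ((2 ^ k * (1 / s)) ^ (-α)) *
          radialMass N F (2 ^ (k + 1) * (1 / s))) * radialMass N G s ^ β := by
        gcongr
        exact radialTail_le_tsum_radialMass hα (by positivity)
    _ ≤ ∑' k : ℕ, ENNReal.ofReal (s ^ α * 2 ^ (N * β) * (2 ^ (N * β - α)) ^ k) * L := by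
        rw [← ENNReal.tsum_mul_right]
        exact ENNReal.tsum_le_tsum hterm
    _ = ENNReal.ofReal (s ^ α * 2 ^ (N * β) / (1 - 2 ^ (N * β - α))) * L := by
        rw [ENNReal.tsum_mul_right,
          tsum_ofReal_mul_geometric (by positivity) (by positivity) hratio]

lemma radialTail_mul_radialTail_rpow_le (hN : 0 < N) (hα : N < α) (hβ : 0 < β)
    (hG : AntitoneOn G (Ioi 0))
    (hloc : ∀ s : ℝ, 0 < s → radialMass N F (1 / s) * radialMass N G s ^ β ≤ L)
    {s : ℝ} (hs : 0 < s) :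
    radialTail N (α * β) F (1 / s) * radialTail N α G s ^ β ≤
      ENNReal.ofReal ((N / (α - N)) ^ β * (2 ^ (N * β) / (1 - 2 ^ (N * β - α * β)))) * L := by
  have hαN : 0 < N / (α - N) := div_pos hN (sub_pos.2 hα)
  have hαβ : N * β < α * β := by gcongr
  have hcancel : (N / (α - N) * s ^ (-α)) ^ β * (s ^ (α * β) * 2 ^ (N * β) /
      (1 - 2 ^ (N * β - α * β))) =
      (N / (α - N)) ^ β * (2 ^ (N * β) / (1 - 2 ^ (N * β - α * β))) := by
    rw [Real.mul_rpow hαN.le (by positivity), ← Real.rpow_mul hs.le, neg_mul, Real.rpow_neg hs.le]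
    have := (Real.rpow_pos_of_pos hs (α * β)).ne'
    field_simp
  calc radialTail N (α * β) F (1 / s) * radialTail N α G s ^ β
      ≤ radialTail N (α * β) F (1 / s) *
          (ENNReal.ofReal (N / (α - N) * s ^ (-α)) * radialMass N G s) ^ β := by
        gcongr
        exact radialTail_le_mul_radialMass hN hα hG hs
    _ = ENNReal.ofReal ((N / (α - N) * s ^ (-α)) ^ β) *
          (radialTail N (α * β) F (1 / s) * radialMass N G s ^ β) := by
        rw [ENNReal.mul_rpow_of_nonneg _ _ hβ.le,
          ENNReal.ofReal_rpow_of_nonneg (by positivity) hβ.le, mul_left_comm]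
    _ ≤ ENNReal.ofReal ((N / (α - N) * s ^ (-α)) ^ β) *
          (ENNReal.ofReal (s ^ (α * β) * 2 ^ (N * β) / (1 - 2 ^ (N * β - α * β))) * L) := by
        gcongr _ * ?_
        exact radialTail_mul_radialMass_rpow_le (mul_pos (hN.trans hα) hβ).le hβ.le hαβ hG hloc hs
    _ = ENNReal.ofReal ((N / (α - N)) ^ β * (2 ^ (N * β) / (1 - 2 ^ (N * β - α * β)))) * L := by
        rw [← mul_assoc, ← ENNReal.ofReal_mul (by positivity), hcancel]

end LocalBound

theorem MuckenhouptCondition.radialTail_of_radialMass {q r a : ℝ} (hN : 0 < N) (hq : 0 < q)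
    (ha : 0 < a) (har : a < r) (hG : AntitoneOn G (Ioi 0))
    (h : MuckenhouptCondition q r (radialMass N F) (radialMass N G)) :
    MuckenhouptCondition q r (radialTail N (N * q / a) F) (radialTail N (N * r / a) G) := by
  have hr : 0 < r := ha.trans har
  have hexp : N * q / a = N * r / a * (q / r) := by field_simp
  have hNr : N < N * r / a := by
    rw [lt_div_iff₀ ha]
    gcongr
  rw [muckenhouptCondition_iff hq] at h ⊢
  obtain ⟨C, hC, hbound⟩ := h
  rw [hexp]
  exact ⟨_, ENNReal.mul_ne_top ENNReal.ofReal_ne_top hC, fun _ hs =>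
    radialTail_mul_radialTail_rpow_le hN hNr (by positivity) hG hbound hs⟩

lemma radialMass_ofReal (N : ℝ) (u : ℝ → ℝ) (x : ℝ) :
    radialMass N (fun t => ENNReal.ofReal (u t)) x =
      ∫⁻ t in Ioo 0 x, ENNReal.ofReal (u t * t ^ (N - 1)) :=
  setLIntegral_congr_fun measurableSet_Ioo fun _ ht =>
    (ENNReal.ofReal_mul' (Real.rpow_nonneg ht.1.le _)).symm

lemma radialTail_ofReal (N α : ℝ) (u : ℝ → ℝ) {x : ℝ} (hx : 0 ≤ x) :
    radialTail N α (fun t => ENNReal.ofReal (u t)) x =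
      ∫⁻ t in Ioi x, ENNReal.ofReal (u t * t ^ (-α + N - 1)) :=
  setLIntegral_congr_fun measurableSet_Ioi fun _ ht =>
    (ENNReal.ofReal_mul' (Real.rpow_nonneg (hx.trans (le_of_lt ht)) _)).symm

lemma strictAntiOn_div_sub_one : StrictAntiOn (fun p : ℝ => p / (p - 1)) (Ioi 1) := by
  intro x (hx : 1 < x) y _ hxy
  rw [div_lt_div_iff₀ (by linarith) (by linarith)]
  linarith

theorem stmt0_general {N q r a : ℝ} (hN : 0 < N) (hq : 0 < q) (hr : 0 < r) (ha : 0 < a)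
    {U V : ℝ → ℝ} (hU0 : ∀ t ∈ Ioi (0 : ℝ), 0 ≤ U t) (hV0 : ∀ t ∈ Ioi (0 : ℝ), 0 < V t)
    (hcase : (a < r ∧ MonotoneOn V (Ioi 0)) ∨ (a < q ∧ AntitoneOn U (Ioi 0)))
    (hloc : ∃ M : ℝ, ∀ s : ℝ, 0 < s →
      (∫⁻ t in Ioo (0 : ℝ) (1 / s), ENNReal.ofReal (U t ^ q * t ^ (N - 1))) ^ (1 / q) *
      (∫⁻ t in Ioo (0 : ℝ) s, ENNReal.ofReal (V t ^ (-r) * t ^ (N - 1))) ^ (1 / r)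
        ≤ ENNReal.ofReal M) :
    ∃ M : ℝ, ∀ s : ℝ, 0 < s →
      (∫⁻ t in Ioi (1 / s), ENNReal.ofReal (U t ^ q * t ^ (-(N * q / a) + N - 1))) ^ (1 / q) *
      (∫⁻ t in Ioi s, ENNReal.ofReal (V t ^ (-r) * t ^ (-(N * r / a) + N - 1))) ^ (1 / r)
        ≤ ENNReal.ofReal M := by
  set F : ℝ → ℝ≥0∞ := fun t => ENNReal.ofReal (U t ^ q) with hF
  set G : ℝ → ℝ≥0∞ := fun t => ENNReal.ofReal (V t ^ (-r)) with hG
  have localCondition : MuckenhouptCondition q r (radialMass N F) (radialMass N G) := by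
    simpa only [MuckenhouptCondition, hF, hG, radialMass_ofReal] using hloc
  have tailCondition :
      MuckenhouptCondition q r (radialTail N (N * q / a) F) (radialTail N (N * r / a) G) := by
    rcases hcase with ⟨har, hV⟩ | ⟨haq, hU⟩
    · have hG_anti : AntitoneOn G (Ioi 0) := ENNReal.ofReal_mono.comp_antitoneOn
        ((Real.antitoneOn_rpow_Ioi_of_exponent_nonpos (by linarith)).comp_MonotoneOn hV hV0)
      exact localCondition.radialTail_of_radialMass hN hq ha har hG_anti
    · have hF_anti : AntitoneOn F (Ioi 0) := ENNReal.ofReal_mono.comp_antitoneOn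
        ((Real.monotoneOn_rpow_Ici_of_exponent_nonneg hq.le).comp_AntitoneOn hU hU0)
      exact (localCondition.symm.radialTail_of_radialMass hN hr ha haq hF_anti).symm
  obtain ⟨M, hM⟩ := tailCondition
  refine ⟨M, fun s hs => ?_⟩
  rw [← radialTail_ofReal N _ _ (by positivity), ← radialTail_ofReal N _ _ hs.le]
  exact hM s hs

/-- If the "local" weight condition with power `t^(N-1)` holds for a
non-increasing `U` and a non-decreasing `V`, and either `p < q₀` or `q > q₀'`, then the
corresponding "global" condition with powers `t^(-Nq/q₀' + N - 1)`, `t^(-Np'/q₀' + N - 1)`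
holds as well. -/
theorem stmt0 (q₀ N p q p' q₀' : ℝ)
    (hq₀ : 1 < q₀) (hN : 1 ≤ N) (hp : 1 < p) (hq : 1 ≤ q)
    (hp'def : p' = p / (p - 1)) (hq₀'def : q₀' = q₀ / (q₀ - 1))
    (hcase : p < q₀ ∨ q > q₀')
    (U V : ℝ → ℝ)
    (hU0 : ∀ t ∈ Ioi (0:ℝ), 0 ≤ U t) (hV0 : ∀ t ∈ Ioi (0:ℝ), 0 < V t)
    (hUanti : AntitoneOn U (Ioi 0)) (hVmono : MonotoneOn V (Ioi 0))
    (hloc : ∃ M : ℝ, ∀ s : ℝ, 0 < s →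
      (∫⁻ t in Ioo (0:ℝ) (1/s), ENNReal.ofReal (U t ^ q * t ^ (N - 1))) ^ (1/q) *
      (∫⁻ t in Ioo (0:ℝ) s, ENNReal.ofReal (V t ^ (-p') * t ^ (N - 1))) ^ (1/p')
        ≤ ENNReal.ofReal M) :
    ∃ M : ℝ, ∀ s : ℝ, 0 < s →
      (∫⁻ t in Ioi (1/s), ENNReal.ofReal (U t ^ q * t ^ (-(N*q/q₀') + N - 1))) ^ (1/q) *
      (∫⁻ t in Ioi s, ENNReal.ofReal (V t ^ (-p') * t ^ (-(N*p'/q₀') + N - 1))) ^ (1/p')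
        ≤ ENNReal.ofReal M := by
  subst hp'def hq₀'def
  exact stmt0_general (by linarith) (by linarith) (div_pos (by linarith) (by linarith))
    (div_pos (by linarith) (by linarith)) hU0 hV0
    (hcase.imp (fun h => ⟨strictAntiOn_div_sub_one hp hq₀ h, hVmono⟩) (⟨·, hUanti⟩)) hloc
end

section
/- Let (M₁, μ) and (M₂, ν) be σ-finite measure spaces, a ∈ (1, 2] with a' = a/(a−1), and let T be a sublinear operator on L¹(μ) ∩ L^a(μ) (i.e. |T(f+g)| ≤ |Tf| + |Tg| ν-a.e. and |T(cf)| = |c|·|Tf| ν-a.e.) satisfying ess sup_ν |Tf| ≤ A‖f‖_{L¹(μ)} and ‖Tf‖_{L^{a'}(ν)} ≤ B‖f‖_{L^{a}(μ)}. Let u be a non-negative ν-measurable function on M₂ and v a positive μ-measurable function on M₁; write U = u* (rearrangement with respect to ν) and 1/V = (1/v)* (rearrangement with respect to μ). Let 1 < p ≤ q < ∞ with p' = p/(p−1). If sup_{s>0} (∫₀^{1/s} U(t)^q dt)^{1/q} (∫₀^{s} V(t)^{−p'} dt)^{1/p'} < ∞ and sup_{s>0} (∫_{1/s}^{∞} U(t)^q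 t^{−q/a'} dt)^{1/q} (∫_{s}^{∞} V(t)^{−p'} t^{−p'/a'} dt)^{1/p'} < ∞, then there exists a constant C > 0 such that (∫_{M₂} (u |Tf|)^q dν)^{1/q} ≤ C (∫_{M₁} (v |f|)^p dμ)^{1/p} for all f ∈ L¹(μ) ∩ L^a(μ). -/
open MeasureTheory Set ENNReal

/-- The non-increasing rearrangement of `f` with respect to `μ`:
`f*(t) = inf {α : μ({x : |f x| > α}) ≤ t}`. -/
noncomputable def rearr {X : Type*} [MeasurableSpace X] (μ : Measure X)
    (f : X → ℝ) (t : ℝ) : ℝ≥0∞ :=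
  sInf {α : ℝ≥0∞ | μ {x | α < ENNReal.ofReal |f x|} ≤ ENNReal.ofReal t}

/-!
Splitting `f` at a set `S` of measure at most `2 / t` outside of which both factors of
`|f| = (v |f|) (1 / v)` lie below their rearrangements at `1 / t` gives the Calderón type bound
`(T f)*(t) ≲ ∫₀^{1/t} (v f)* (1/v)* + t^{-1/a'} ∫_{1/t}^∞ r^{-1/a'} (v f)* (1/v)* dr`:
the `(1, ∞)` estimate handles `f` on `S`, the `(a, a')` estimate handles `f` off `S`. By the
Hardy–Littlewood inequality it remains to bound the two Hardy operators on the right from `L^p` to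
a weighted `L^q`, which is done by cutting both half-lines into dyadic level sets of the
primitives and applying Hölder's inequality on each block.
-/

lemma rpow_eq_rpow_sub_one_mul {r : ℝ} (hr : 1 ≤ r) (x : ℝ≥0∞) : x ^ r = x ^ (r - 1) * x := by
  conv_lhs => rw [← sub_add_cancel r 1,
    ENNReal.rpow_add_of_nonneg _ _ (sub_nonneg.2 hr) zero_le_one, ENNReal.rpow_one]

/-! ### Decreasing rearrangements -/

section Rearrangement

variable {X : Type*} [MeasurableSpace X] {m : Measure X} {g k : X → ℝ≥0∞} {t : ℝ} {α : ℝ≥0∞}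

/-- The non-increasing rearrangement of an extended nonnegative function; `rearr μ f` is the
rearrangement of `|f|`. Infinite values are allowed so that products and powers of
rearrangements need no finiteness assumptions. -/
noncomputable def erearr (m : Measure X) (g : X → ℝ≥0∞) (t : ℝ) : ℝ≥0∞ :=
  sInf {α : ℝ≥0∞ | m {x | α < g x} ≤ ENNReal.ofReal t}

lemma measure_erearr_lt_le (m : Measure X) (g : X → ℝ≥0∞) (t : ℝ) :
    m {x | erearr m g t < g x} ≤ ENNReal.ofReal t := by
  obtain ⟨w, hw_anti, hw_tendsto, hw_mem⟩ := exists_seq_tendsto_sInf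
    (S := {α : ℝ≥0∞ | m {x | α < g x} ≤ ENNReal.ofReal t}) ⟨⊤, by simp⟩ (OrderBot.bddBelow _)
  have h_union : {x | erearr m g t < g x} = ⋃ n, {x | w n < g x} := by
    ext x
    simp only [mem_ofPred_eq, mem_iUnion]
    exact ⟨fun h ↦ (hw_tendsto.eventually_lt_const h).exists,
      fun ⟨n, hn⟩ ↦ (sInf_le (hw_mem n)).trans_lt hn⟩
  have h_mono : Monotone fun n ↦ {x | w n < g x} := fun i j hij x hx ↦ (hw_anti hij).trans_lt hx
  rw [h_union, h_mono.measure_iUnion]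
  exact iSup_le hw_mem

lemma erearr_le_iff : erearr m g t ≤ α ↔ m {x | α < g x} ≤ ENNReal.ofReal t :=
  ⟨fun h ↦ (measure_mono fun _ hx ↦ h.trans_lt hx).trans (measure_erearr_lt_le m g t),
    fun h ↦ sInf_le h⟩

lemma lt_erearr_iff : α < erearr m g t ↔ ENNReal.ofReal t < m {x | α < g x} := by
  simpa only [not_le] using not_congr (erearr_le_iff (m := m) (g := g) (t := t) (α := α))

lemma erearr_antitone (m : Measure X) (g : X → ℝ≥0∞) : Antitone (erearr m g) := fun _ _ hst ↦
  erearr_le_iff.2 ((measure_erearr_lt_le m g _).trans (ENNReal.ofReal_le_ofReal hst))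

lemma measurable_erearr (m : Measure X) (g : X → ℝ≥0∞) : Measurable (erearr m g) :=
  (erearr_antitone m g).measurable

lemma erearr_rpow (m : Measure X) (g : X → ℝ≥0∞) {r : ℝ} (hr : 0 < r) (t : ℝ) :
    erearr m (fun x ↦ g x ^ r) t = erearr m g t ^ r := by
  refine le_antisymm (erearr_le_iff.2 ?_) ((ENNReal.le_rpow_inv_iff hr).1 (erearr_le_iff.2 ?_))
  · simpa only [ENNReal.rpow_lt_rpow_iff hr] using measure_erearr_lt_le m g t
  · simpa only [ENNReal.rpow_inv_lt_iff hr] using measure_erearr_lt_le m (fun x ↦ g x ^ r) t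

lemma erearr_le_add_erearr_sub (m : Measure X) (g : X → ℝ≥0∞) (c : ℝ≥0∞) (t : ℝ) :
    erearr m g t ≤ c + erearr m (fun x ↦ g x - c) t :=
  erearr_le_iff.2 <| by
    simpa only [lt_tsub_iff_left] using measure_erearr_lt_le m (fun x ↦ g x - c) t

lemma erearr_restrict_le (m : Measure X) (s : Set X) (g : X → ℝ≥0∞) (t : ℝ) :
    erearr (m.restrict s) g t ≤ erearr m g t :=
  erearr_le_iff.2 <| (Measure.restrict_apply_le s _).trans (measure_erearr_lt_le m g t)

lemma erearr_restrict_eq_zero {s : Set X} (hs : m s ≤ ENNReal.ofReal t) :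
    erearr (m.restrict s) g t = 0 :=
  nonpos_iff_eq_zero.1 <| erearr_le_iff.2 <|
    (measure_mono (subset_univ _)).trans (by rwa [Measure.restrict_apply_univ])

lemma erearr_restrict_le_max {s : Set X} (hs : MeasurableSet s) {τ : ℝ}
    (h : ∀ x ∈ s, g x ≤ erearr m g τ) : erearr (m.restrict s) g t ≤ erearr m g (max t τ) := by
  rcases le_total t τ with hle | hle
  · have h_empty : {x | erearr m g τ < g x} ∩ s = ∅ :=
      eq_empty_of_forall_notMem fun x hx ↦ (h x hx.2).not_gt hx.1
    rw [max_eq_right hle, erearr_le_iff, Measure.restrict_apply' hs, h_empty, measure_empty]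
    exact zero_le
  · rw [max_eq_left hle]
    exact erearr_restrict_le m s g t

lemma exists_measurableSet_le_erearr (m : Measure X) (g k : X → ℝ≥0∞) (ht : 0 ≤ t) :
    ∃ s, MeasurableSet s ∧ m s ≤ ENNReal.ofReal (2 * t) ∧
      (∀ x ∈ sᶜ, g x ≤ erearr m g t) ∧ ∀ x ∈ sᶜ, k x ≤ erearr m k t := by
  let s := {x | erearr m g t < g x} ∪ {x | erearr m k t < k x}
  refine ⟨toMeasurable m s, measurableSet_toMeasurable m s, ?_, ?_, ?_⟩
  · rw [measure_toMeasurable, two_mul, ENNReal.ofReal_add ht ht]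
    exact (measure_union_le _ _).trans
      (add_le_add (measure_erearr_lt_le m g t) (measure_erearr_lt_le m k t))
  all_goals
    refine fun x hx ↦ not_lt.1 fun hlt ↦ hx (subset_toMeasurable m s ?_)
  exacts [Or.inl hlt, Or.inr hlt]

end Rearrangement

section LayerCake

variable {X : Type*} [MeasurableSpace X] {m : Measure X} {g k : X → ℝ≥0∞}

lemma volume_Ioi_zero_inter_ofReal_lt (c : ℝ≥0∞) :
    volume.restrict (Ioi (0 : ℝ)) {t | ENNReal.ofReal t < c} = c := by
  rw [Measure.restrict_apply (measurableSet_lt ENNReal.measurable_ofReal measurable_const)]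
  rcases eq_or_ne c ⊤ with rfl | hc
  · simp
  · have h_Ioo : {t : ℝ | ENNReal.ofReal t < c} ∩ Ioi 0 = Ioo 0 c.toReal := by
      ext t
      refine ⟨fun ⟨hlt, hpos⟩ ↦ ⟨hpos, ?_⟩, fun ⟨hpos, hlt⟩ ↦ ⟨?_, hpos⟩⟩
      · exact (ENNReal.ofReal_lt_iff_lt_toReal (mem_Ioi.1 hpos).le hc).1 hlt
      · exact (ENNReal.ofReal_lt_iff_lt_toReal hpos.le hc).2 hlt
    rw [h_Ioo, Real.volume_Ioo, sub_zero, ENNReal.ofReal_toReal hc]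

lemma lintegral_eq_lintegral_measure_ofReal_lt (hg : AEMeasurable g m) :
    ∫⁻ x, g x ∂m = ∫⁻ α in Ioi (0 : ℝ), m {x | ENNReal.ofReal α < g x} := by
  by_cases h_top : m {x | g x = ⊤} = 0
  · have h_real : g =ᵐ[m] fun x ↦ ENNReal.ofReal (g x).toReal :=
      (measure_eq_zero_iff_ae_notMem.1 h_top).mono fun x hx ↦ (ENNReal.ofReal_toReal hx).symm
    rw [lintegral_congr_ae h_real, lintegral_eq_lintegral_meas_lt m
      (Filter.Eventually.of_forall fun _ ↦ ENNReal.toReal_nonneg) hg.ennreal_toReal]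
    refine setLIntegral_congr_fun measurableSet_Ioi fun α hα ↦ measure_congr ?_
    filter_upwards [measure_eq_zero_iff_ae_notMem.1 h_top] with x hx
    exact propext (ENNReal.ofReal_lt_iff_lt_toReal (mem_Ioi.1 hα).le hx).symm
  · rw [lintegral_eq_top_of_measure_eq_top_ne_zero hg h_top, eq_comm, eq_top_iff]
    calc ⊤ = ∫⁻ _ in Ioi (0 : ℝ), m {x | g x = ⊤} := by simp [ENNReal.mul_top h_top]
      _ ≤ _ := lintegral_mono fun α ↦ measure_mono fun x (hx : g x = ⊤) ↦
        ENNReal.ofReal_lt_top.trans_eq hx.symm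

lemma lintegral_mul_eq_lintegral_lintegral_measure_inter
    (hg : AEMeasurable g m) (hk : AEMeasurable k m) :
    ∫⁻ x, g x * k x ∂m = ∫⁻ α in Ioi (0 : ℝ), ∫⁻ β in Ioi (0 : ℝ),
      m ({x | ENNReal.ofReal α < g x} ∩ {x | ENNReal.ofReal β < k x}) := by
  have h_dens := withDensity_absolutelyContinuous m k
  have h_mul : ∫⁻ x, g x * k x ∂m = ∫⁻ x, g x ∂m.withDensity k := by
    rw [lintegral_withDensity_eq_lintegral_mul₀ hk hg]
    exact lintegral_congr fun x ↦ mul_comm (g x) (k x)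
  rw [h_mul, lintegral_eq_lintegral_measure_ofReal_lt (hg.mono_ac h_dens)]
  refine lintegral_congr fun α ↦ ?_
  have h_null : NullMeasurableSet {x | ENNReal.ofReal α < g x} m :=
    nullMeasurableSet_lt aemeasurable_const hg
  rw [withDensity_apply₀ _ h_null, lintegral_eq_lintegral_measure_ofReal_lt hk.restrict]
  refine lintegral_congr fun β ↦ ?_
  rw [Measure.restrict_apply₀' h_null, inter_comm]

lemma lintegral_erearr (hg : AEMeasurable g m) :
    ∫⁻ t in Ioi (0 : ℝ), erearr m g t = ∫⁻ x, g x ∂m := by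
  rw [lintegral_eq_lintegral_measure_ofReal_lt (measurable_erearr m g).aemeasurable,
    lintegral_eq_lintegral_measure_ofReal_lt hg]
  simp only [lt_erearr_iff, volume_Ioi_zero_inter_ofReal_lt]

lemma lintegral_erearr_rpow (hg : AEMeasurable g m) {r : ℝ} (hr : 0 < r) :
    ∫⁻ t in Ioi (0 : ℝ), erearr m g t ^ r = ∫⁻ x, g x ^ r ∂m := by
  simp only [← erearr_rpow m g hr, lintegral_erearr (hg.pow_const r)]

lemma lintegral_mul_le_lintegral_erearr_mul (hg : AEMeasurable g m) (hk : AEMeasurable k m) :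
    ∫⁻ x, g x * k x ∂m ≤ ∫⁻ t in Ioi (0 : ℝ), erearr m g t * erearr m k t := by
  rw [lintegral_mul_eq_lintegral_lintegral_measure_inter hg hk,
    lintegral_mul_eq_lintegral_lintegral_measure_inter
      (measurable_erearr m g).aemeasurable (measurable_erearr m k).aemeasurable]
  gcongr with α β
  simp only [lt_erearr_iff, ← ofPred_and, ← lt_min_iff, volume_Ioi_zero_inter_ofReal_lt]
  exact le_min (measure_mono inter_subset_left) (measure_mono inter_subset_right)

lemma lintegral_mul_rpow_le_lintegral_erearr_mul_rpow (hg : AEMeasurable g m)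
    (hk : AEMeasurable k m) {r : ℝ} (hr : 0 < r) :
    ∫⁻ x, (g x * k x) ^ r ∂m ≤ ∫⁻ t in Ioi (0 : ℝ), (erearr m g t * erearr m k t) ^ r := by
  simpa only [erearr_rpow _ _ hr, ← ENNReal.mul_rpow_of_nonneg _ _ hr.le] using
    lintegral_mul_le_lintegral_erearr_mul (hg.pow_const r) (hk.pow_const r)

end LayerCake

section Antitone

variable {G : ℝ → ℝ≥0∞} {s a a' : ℝ}

lemma ofReal_mul_le_setLIntegral_Ioo (hG : AntitoneOn G (Ioi 0)) :
    ENNReal.ofReal s * G s ≤ ∫⁻ r in Ioo (0 : ℝ) s, G r := by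
  calc ENNReal.ofReal s * G s = ∫⁻ _ in Ioo (0 : ℝ) s, G s := by
        rw [setLIntegral_const, Real.volume_Ioo, sub_zero, mul_comm]
    _ ≤ ∫⁻ r in Ioo (0 : ℝ) s, G r := setLIntegral_mono' measurableSet_Ioo fun r hr ↦
        hG hr.1 (hr.1.trans hr.2) hr.2.le

lemma setLIntegral_Ioo_two_mul_le (hG : AntitoneOn G (Ioi 0)) :
    ∫⁻ r in Ioo 0 (2 * s), G r ≤ 2 * ∫⁻ r in Ioo 0 s, G r := by
  rcases le_or_gt s 0 with hs | hs
  · simp [Ioo_eq_empty_of_le (show 2 * s ≤ 0 by linarith)]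
  have h_tail : ∫⁻ r in Ico s (2 * s), G r ≤ ∫⁻ r in Ioo 0 s, G r :=
    calc ∫⁻ r in Ico s (2 * s), G r ≤ ∫⁻ _ in Ico s (2 * s), G s :=
          setLIntegral_mono' measurableSet_Ico fun r hr ↦ hG hs (hs.trans_le hr.1) hr.1
      _ = ENNReal.ofReal s * G s := by
          rw [setLIntegral_const, Real.volume_Ico, mul_comm, two_mul, add_sub_cancel_right]
      _ ≤ ∫⁻ r in Ioo 0 s, G r := ofReal_mul_le_setLIntegral_Ioo hG
  calc ∫⁻ r in Ioo 0 (2 * s), G r = ∫⁻ r in Ioo 0 s ∪ Ico s (2 * s), G r := by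
        rw [Ioo_union_Ico_eq_Ioo hs (by linarith)]
    _ ≤ (∫⁻ r in Ioo 0 s, G r) + ∫⁻ r in Ico s (2 * s), G r := lintegral_union_le _ _ _
    _ ≤ 2 * ∫⁻ r in Ioo 0 s, G r := (add_le_add le_rfl h_tail).trans_eq (two_mul _).symm

lemma setLIntegral_Ioo_rpow {b : ℝ} (hs : 0 < s) (hb : -1 < b) :
    ∫⁻ r in Ioo 0 s, ENNReal.ofReal (r ^ b) = ENNReal.ofReal (s ^ (b + 1) / (b + 1)) := by
  have h_int : IntegrableOn (fun r : ℝ ↦ r ^ b) (Ioc 0 s) :=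
    (intervalIntegrable_iff_integrableOn_Ioc_of_le hs.le).1
      (intervalIntegral.intervalIntegrable_rpow' hb)
  have h_nonneg : 0 ≤ᵐ[volume.restrict (Ioc 0 s)] fun r : ℝ ↦ r ^ b :=
    (ae_restrict_mem measurableSet_Ioc).mono fun r hr ↦ Real.rpow_nonneg hr.1.le b
  rw [setLIntegral_congr Ioo_ae_eq_Ioc, ← ofReal_integral_eq_lintegral_ofReal h_int h_nonneg,
    ← intervalIntegral.integral_of_le hs.le, integral_rpow (Or.inl hb),
    Real.zero_rpow (by linarith), sub_zero]

lemma ofReal_rpow_mul_le_setLIntegral (ha : a.HolderConjugate a') (hG : AntitoneOn G (Ioi 0))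
    (hs : 0 < s) :
    ENNReal.ofReal (s ^ (1 / a)) * G s ≤
      ∫⁻ r in Ioo 0 s, ENNReal.ofReal (r ^ (-(1 / a'))) * G r := by
  have h_anti : AntitoneOn (fun r ↦ ENNReal.ofReal (r ^ (-(1 / a'))) * G r) (Ioi 0) := by
    refine fun r hr ρ hρ hle ↦ mul_le_mul' (ENNReal.ofReal_le_ofReal ?_) (hG hr hρ hle)
    exact Real.rpow_le_rpow_of_nonpos hr hle (neg_nonpos.2 (one_div_nonneg.2 ha.symm.pos.le))
  have h_exp : s ^ (1 / a) = s * s ^ (-(1 / a')) := by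
    rw [show 1 / a = 1 + -(1 / a') by linarith [ha.one_div_add_one_div],
      Real.rpow_add hs, Real.rpow_one]
  calc ENNReal.ofReal (s ^ (1 / a)) * G s
      = ENNReal.ofReal s * (ENNReal.ofReal (s ^ (-(1 / a'))) * G s) := by
        rw [h_exp, ENNReal.ofReal_mul hs.le, mul_assoc]
    _ ≤ _ := ofReal_mul_le_setLIntegral_Ioo h_anti

/-- The embedding `L^{a,1} ⊆ L^a` of Lorentz spaces, in terms of rearrangements. -/
lemma setLIntegral_rpow_le_of_antitoneOn (ha : a.HolderConjugate a') (hG : AntitoneOn G (Ioi 0)) :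
    ∫⁻ r in Ioi 0, G r ^ a ≤ (∫⁻ r in Ioi 0, ENNReal.ofReal (r ^ (-(1 / a'))) * G r) ^ a := by
  set K := ∫⁻ r in Ioi 0, ENNReal.ofReal (r ^ (-(1 / a'))) * G r
  have ha1 : 0 ≤ a - 1 := ha.sub_one_pos.le
  have h_le (r : ℝ) (hr : 0 < r) : ENNReal.ofReal (r ^ (1 / a)) * G r ≤ K :=
    (ofReal_rpow_mul_le_setLIntegral ha hG hr).trans (lintegral_mono_set Ioo_subset_Ioi_self)
  have h_factor (r : ℝ) (hr : 0 < r) :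
      G r ^ (a - 1) =
        (ENNReal.ofReal (r ^ (1 / a)) * G r) ^ (a - 1) * ENNReal.ofReal (r ^ (-(1 / a'))) := by
    have h_exp : 1 / a * (a - 1) + -(1 / a') = 0 := by
      rw [mul_sub, one_div_mul_cancel ha.ne_zero, mul_one]
      linarith [ha.one_div_add_one_div]
    rw [ENNReal.mul_rpow_of_nonneg _ _ ha1, ENNReal.ofReal_rpow_of_nonneg (by positivity) ha1,
      mul_right_comm, ← ENNReal.ofReal_mul (by positivity), ← Real.rpow_mul hr.le,
      ← Real.rpow_add hr, h_exp, Real.rpow_zero, ENNReal.ofReal_one, one_mul]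
  calc ∫⁻ r in Ioi 0, G r ^ a
      ≤ ∫⁻ r in Ioi 0, K ^ (a - 1) * (ENNReal.ofReal (r ^ (-(1 / a'))) * G r) := by
        refine setLIntegral_mono' measurableSet_Ioi fun r hr ↦ ?_
        rw [rpow_eq_rpow_sub_one_mul ha.lt.le, h_factor r hr, mul_assoc]
        gcongr
        exact h_le r hr
    _ = K ^ a := by
        rw [rpow_eq_rpow_sub_one_mul ha.lt.le, lintegral_const_mul'']
        exact AEMeasurable.mul (by fun_prop)
          (aemeasurable_restrict_of_antitoneOn measurableSet_Ioi hG)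

lemma setLIntegral_Ioo_rpow_mul_max_le (ha : a.HolderConjugate a') (hG : AntitoneOn G (Ioi 0))
    (hs : 0 < s) :
    ∫⁻ r in Ioo 0 s, ENNReal.ofReal (r ^ (-(1 / a'))) * G (max r s) ≤
      ENNReal.ofReal (a * s ^ (-(1 / a'))) * ∫⁻ r in Ioo 0 s, G r := by
  have h_exp : -(1 / a') + 1 = 1 / a := by linarith [ha.one_div_add_one_div]
  have h_gt : -1 < -(1 / a') := by linarith [ha.one_div_pos]
  have h_const : s ^ (-(1 / a') + 1) / (-(1 / a') + 1) = a * s ^ (-(1 / a')) * s := by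
    rw [Real.rpow_add hs, Real.rpow_one, h_exp, div_div_eq_mul_div, div_one]
    ring
  calc ∫⁻ r in Ioo 0 s, ENNReal.ofReal (r ^ (-(1 / a'))) * G (max r s)
      = (∫⁻ r in Ioo 0 s, ENNReal.ofReal (r ^ (-(1 / a')))) * G s := by
        rw [← lintegral_mul_const _ (by fun_prop)]
        refine setLIntegral_congr_fun measurableSet_Ioo fun r hr ↦ ?_
        simp only [max_eq_right hr.2.le]
    _ = ENNReal.ofReal (a * s ^ (-(1 / a'))) * (ENNReal.ofReal s * G s) := by
        have := ha.pos
        rw [setLIntegral_Ioo_rpow hs h_gt, h_const, ENNReal.ofReal_mul (by positivity), mul_assoc]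
    _ ≤ _ := mul_le_mul_right (ofReal_mul_le_setLIntegral_Ioo hG) _

lemma setLIntegral_rpow_max_le (ha : a.HolderConjugate a') (hG : AntitoneOn G (Ioi 0))
    (hs : 0 < s) :
    ∫⁻ r in Ioi 0, G (max r s) ^ a ≤
      (ENNReal.ofReal (a * s ^ (-(1 / a'))) * (∫⁻ r in Ioo 0 s, G r) +
        ∫⁻ r in Ioi s, ENNReal.ofReal (r ^ (-(1 / a'))) * G r) ^ a := by
  have h_cut : AntitoneOn (fun r ↦ G (max r s)) (Ioi 0) := fun r _ ρ _ h ↦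
    hG (mem_Ioi.2 (lt_max_of_lt_right hs)) (mem_Ioi.2 (lt_max_of_lt_right hs))
      (max_le_max_right s h)
  have h_tail : ∫⁻ r in Ici s, ENNReal.ofReal (r ^ (-(1 / a'))) * G (max r s) =
      ∫⁻ r in Ioi s, ENNReal.ofReal (r ^ (-(1 / a'))) * G r := by
    rw [setLIntegral_congr Ioi_ae_eq_Ici.symm]
    refine setLIntegral_congr_fun measurableSet_Ioi fun r hr ↦ ?_
    simp only [max_eq_left (mem_Ioi.1 hr).le]
  refine (setLIntegral_rpow_le_of_antitoneOn ha h_cut).trans (ENNReal.rpow_le_rpow ?_ ha.nonneg)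
  rw [← Ioo_union_Ici_eq_Ioi hs]
  exact (lintegral_union_le _ _ _).trans
    (add_le_add (setLIntegral_Ioo_rpow_mul_max_le ha hG hs) h_tail.le)

end Antitone

section Truncation

variable {X : Type*} [MeasurableSpace X] {m : Measure X} {g w : X → ℝ≥0∞} {s : ℝ}

lemma setLIntegral_mul_le_setLIntegral_Ioo_erearr_mul (hg : AEMeasurable g m)
    (hw : AEMeasurable w m) {E : Set X} (hE : m E ≤ ENNReal.ofReal s) :
    ∫⁻ x in E, g x * w x ∂m ≤ ∫⁻ r in Ioo 0 s, erearr m g r * erearr m w r := by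
  calc ∫⁻ x in E, g x * w x ∂m
      ≤ ∫⁻ r in Ioi 0, erearr (m.restrict E) g r * erearr (m.restrict E) w r :=
        lintegral_mul_le_lintegral_erearr_mul hg.restrict hw.restrict
    _ ≤ ∫⁻ r in Ioi 0, (Iio s).indicator (fun r ↦ erearr m g r * erearr m w r) r := by
        refine lintegral_mono fun r ↦ ?_
        rcases lt_or_ge r s with hr | hr
        · rw [indicator_of_mem (mem_Iio.2 hr)]
          exact mul_le_mul' (erearr_restrict_le m E g r) (erearr_restrict_le m E w r)
        · rw [erearr_restrict_eq_zero (hE.trans (ENNReal.ofReal_le_ofReal hr)), zero_mul]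
          exact zero_le
    _ = ∫⁻ r in Ioo 0 s, erearr m g r * erearr m w r := by
        rw [setLIntegral_indicator measurableSet_Iio, inter_comm, Ioi_inter_Iio]

lemma setLIntegral_mul_rpow_le (hg : AEMeasurable g m) (hw : AEMeasurable w m) {E : Set X}
    (hE : MeasurableSet E) (hgE : ∀ x ∈ E, g x ≤ erearr m g s) (hwE : ∀ x ∈ E, w x ≤ erearr m w s)
    {a a' : ℝ} (ha : a.HolderConjugate a') (hs : 0 < s) :
    (∫⁻ x in E, (g x * w x) ^ a ∂m) ^ (1 / a) ≤
      ENNReal.ofReal (a * s ^ (-(1 / a'))) * (∫⁻ r in Ioo 0 s, erearr m g r * erearr m w r) +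
        ∫⁻ r in Ioi s, ENNReal.ofReal (r ^ (-(1 / a'))) * (erearr m g r * erearr m w r) := by
  have h_anti : Antitone fun r ↦ erearr m g r * erearr m w r :=
    (erearr_antitone m g).mul' (erearr_antitone m w)
  rw [one_div, ENNReal.rpow_inv_le_iff ha.pos]
  calc ∫⁻ x in E, (g x * w x) ^ a ∂m
      ≤ ∫⁻ r in Ioi 0, (erearr (m.restrict E) g r * erearr (m.restrict E) w r) ^ a :=
        lintegral_mul_rpow_le_lintegral_erearr_mul_rpow hg.restrict hw.restrict ha.pos
    _ ≤ ∫⁻ r in Ioi 0, (erearr m g (max r s) * erearr m w (max r s)) ^ a :=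
        lintegral_mono fun r ↦ ENNReal.rpow_le_rpow
          (mul_le_mul' (erearr_restrict_le_max hE hgE) (erearr_restrict_le_max hE hwE)) ha.nonneg
    _ ≤ _ := setLIntegral_rpow_max_le ha (h_anti.antitoneOn _) hs

end Truncation

/-! ### Operators of strong types `(1, ∞)` and `(a, a')` -/

section Operator

variable {X Y E F : Type*} [MeasurableSpace X] [MeasurableSpace Y]
  [NormedAddCommGroup E] [NormedAddCommGroup F]
  {μ : Measure X} {ν : Measure Y} {φ : Y → ℝ≥0∞} {t : ℝ}

lemma erearr_le_rpow_mul_lintegral_rpow (hφ : AEMeasurable φ ν) {r : ℝ} (hr : 0 < r) (ht : 0 < t) :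
    erearr ν φ t ≤ ENNReal.ofReal (t ^ (-(1 / r))) * (∫⁻ y, φ y ^ r ∂ν) ^ (1 / r) := by
  have h_anti : Antitone fun s ↦ erearr ν φ s ^ r :=
    (ENNReal.monotone_rpow_of_nonneg hr.le).comp_antitone (erearr_antitone ν φ)
  have h_mass : ENNReal.ofReal t * erearr ν φ t ^ r ≤ ∫⁻ y, φ y ^ r ∂ν :=
    calc ENNReal.ofReal t * erearr ν φ t ^ r ≤ ∫⁻ s in Ioo 0 t, erearr ν φ s ^ r :=
          ofReal_mul_le_setLIntegral_Ioo (h_anti.antitoneOn _)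
      _ ≤ ∫⁻ s in Ioi 0, erearr ν φ s ^ r := lintegral_mono_set Ioo_subset_Ioi_self
      _ = ∫⁻ y, φ y ^ r ∂ν := lintegral_erearr_rpow hφ hr
  have h_root : ENNReal.ofReal (t ^ (1 / r)) * erearr ν φ t ≤ (∫⁻ y, φ y ^ r ∂ν) ^ (1 / r) := by
    rw [one_div, ENNReal.le_rpow_inv_iff hr, ENNReal.mul_rpow_of_nonneg _ _ hr.le,
      ENNReal.ofReal_rpow_of_nonneg (by positivity) hr.le, Real.rpow_inv_rpow ht.le hr.ne']
    exact h_mass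
  calc erearr ν φ t
      = ENNReal.ofReal (t ^ (-(1 / r))) * (ENNReal.ofReal (t ^ (1 / r)) * erearr ν φ t) := by
        rw [← mul_assoc, ← ENNReal.ofReal_mul (by positivity), ← Real.rpow_add ht,
          neg_add_cancel, Real.rpow_zero, ENNReal.ofReal_one, one_mul]
    _ ≤ _ := by gcongr

lemma erearr_le_eLpNorm_top_add (hφ : AEMeasurable φ ν) {F₀ F₁ : Y → F}
    (h_le : ∀ᵐ y ∂ν, φ y ≤ ‖F₀ y‖ₑ + ‖F₁ y‖ₑ) {r : ℝ} (hr : 0 < r) (ht : 0 < t) :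
    erearr ν φ t ≤ eLpNorm F₀ ⊤ ν +
      ENNReal.ofReal (t ^ (-(1 / r))) * eLpNorm F₁ (ENNReal.ofReal r) ν := by
  set c := eLpNorm F₀ ⊤ ν
  have h_sub : ∀ᵐ y ∂ν, φ y - c ≤ ‖F₁ y‖ₑ := by
    filter_upwards [h_le, enorm_ae_le_eLpNormEssSup F₀ ν] with y hy h_ess
    rw [← eLpNorm_exponent_top] at h_ess
    exact tsub_le_iff_left.2 (hy.trans (add_le_add_left h_ess _))
  have h_norm : (∫⁻ y, (φ y - c) ^ r ∂ν) ^ (1 / r) ≤ eLpNorm F₁ (ENNReal.ofReal r) ν := by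
    rw [eLpNorm_eq_lintegral_rpow_enorm_toReal (by simpa using hr) ENNReal.ofReal_ne_top,
      ENNReal.toReal_ofReal hr.le]
    refine ENNReal.rpow_le_rpow (lintegral_mono_ae ?_) (one_div_nonneg.2 hr.le)
    filter_upwards [h_sub] with y hy using ENNReal.rpow_le_rpow hy hr.le
  calc erearr ν φ t ≤ c + erearr ν (fun y ↦ φ y - c) t := erearr_le_add_erearr_sub ν φ c t
    _ ≤ _ := by
        gcongr
        exact (erearr_le_rpow_mul_lintegral_rpow (hφ.sub_const c) hr ht).trans (by gcongr)

/-- `T` is subadditive on `L¹ ∩ L^a` and bounded `L¹ → L^∞` and `L^a → L^b` there, with norms at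
most `A` and `B`. `T f` need not be measurable; its `L^b` norm is then a lower integral. -/
structure IsSubadditiveOfStrongTypes (μ : Measure X) (ν : Measure Y) (a b : ℝ) (A B : NNReal)
    (T : (X → E) → Y → F) : Prop where
  norm_add_le : ∀ f g : X → E, MemLp f 1 μ → MemLp f (ENNReal.ofReal a) μ →
    MemLp g 1 μ → MemLp g (ENNReal.ofReal a) μ → ∀ᵐ y ∂ν, ‖T (f + g) y‖ ≤ ‖T f y‖ + ‖T g y‖
  eLpNorm_top_le : ∀ f : X → E, MemLp f 1 μ → MemLp f (ENNReal.ofReal a) μ →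
    eLpNorm (T f) ⊤ ν ≤ A * eLpNorm f 1 μ
  eLpNorm_le : ∀ f : X → E, MemLp f 1 μ → MemLp f (ENNReal.ofReal a) μ →
    eLpNorm (T f) (ENNReal.ofReal b) ν ≤ B * eLpNorm f (ENNReal.ofReal a) μ

variable {a b a' : ℝ} {A B : NNReal} {T : (X → E) → Y → F} {f : X → E} {g w : X → ℝ≥0∞}

namespace IsSubadditiveOfStrongTypes

lemma erearr_le_of_measurableSet (hT : IsSubadditiveOfStrongTypes μ ν a b A B T) (hb : 0 < b)
    (hf1 : MemLp f 1 μ) (hfa : MemLp f (ENNReal.ofReal a) μ) (hφ : AEMeasurable φ ν)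
    (hφT : ∀ᵐ y ∂ν, φ y ≤ ‖T f y‖ₑ) {S : Set X} (hS : MeasurableSet S) (ht : 0 < t) :
    erearr ν φ t ≤ A * eLpNorm f 1 (μ.restrict S) +
      ENNReal.ofReal (t ^ (-(1 / b))) *
        (B * eLpNorm f (ENNReal.ofReal a) (μ.restrict Sᶜ)) := by
  have hf1' := hf1.indicator hS
  have hfa' := hfa.indicator hS
  have hf1_compl := hf1.indicator hS.compl
  have hfa_compl := hfa.indicator hS.compl
  have h_add : ∀ᵐ y ∂ν, φ y ≤ ‖T (S.indicator f) y‖ₑ + ‖T (Sᶜ.indicator f) y‖ₑ := by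
    filter_upwards [hφT, hT.norm_add_le _ _ hf1' hfa' hf1_compl hfa_compl] with y hy h_norm
    rw [indicator_self_add_compl] at h_norm
    refine hy.trans ?_
    simp only [← ofReal_norm]
    rw [← ENNReal.ofReal_add (norm_nonneg _) (norm_nonneg _)]
    exact ENNReal.ofReal_le_ofReal h_norm
  refine (erearr_le_eLpNorm_top_add hφ h_add hb ht).trans ?_
  rw [← eLpNorm_indicator_eq_eLpNorm_restrict hS,
    ← eLpNorm_indicator_eq_eLpNorm_restrict hS.compl]
  gcongr
  exacts [hT.eLpNorm_top_le _ hf1' hfa', hT.eLpNorm_le _ hf1_compl hfa_compl]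

lemma erearr_le (hT : IsSubadditiveOfStrongTypes μ ν a a' A B T) (ha : a.HolderConjugate a')
    (hf1 : MemLp f 1 μ) (hfa : MemLp f (ENNReal.ofReal a) μ) (hg : AEMeasurable g μ)
    (hw : AEMeasurable w μ) (hfgw : ∀ x, ‖f x‖ₑ = g x * w x) (hφ : AEMeasurable φ ν)
    (hφT : ∀ᵐ y ∂ν, φ y ≤ ‖T f y‖ₑ) (ht : 0 < t) :
    erearr ν φ t ≤
      (2 * A + ENNReal.ofReal a * B) * (∫⁻ r in Ioo 0 (1 / t), erearr μ g r * erearr μ w r) +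
        B * (ENNReal.ofReal (t ^ (-(1 / a'))) * ∫⁻ r in Ioi (1 / t),
          ENNReal.ofReal (r ^ (-(1 / a'))) * (erearr μ g r * erearr μ w r)) := by
  have hs : 0 < 1 / t := one_div_pos.2 ht
  set I := ∫⁻ r in Ioo 0 (1 / t), erearr μ g r * erearr μ w r
  set J := ∫⁻ r in Ioi (1 / t), ENNReal.ofReal (r ^ (-(1 / a'))) * (erearr μ g r * erearr μ w r)
  have h_anti : Antitone fun r ↦ erearr μ g r * erearr μ w r :=
    (erearr_antitone μ g).mul' (erearr_antitone μ w)
  obtain ⟨S, hS, hμS, hgS, hwS⟩ := exists_measurableSet_le_erearr μ g w hs.le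
  have h_one : eLpNorm f 1 (μ.restrict S) ≤ 2 * I := by
    rw [eLpNorm_one_eq_lintegral_enorm]
    simp only [hfgw]
    exact (setLIntegral_mul_le_setLIntegral_Ioo_erearr_mul hg hw hμS).trans
      (setLIntegral_Ioo_two_mul_le (h_anti.antitoneOn _))
  have h_a : eLpNorm f (ENNReal.ofReal a) (μ.restrict Sᶜ) ≤
      ENNReal.ofReal (a * (1 / t) ^ (-(1 / a'))) * I + J := by
    rw [eLpNorm_eq_lintegral_rpow_enorm_toReal (by simpa using ha.pos) ENNReal.ofReal_ne_top,
      ENNReal.toReal_ofReal ha.nonneg]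
    simp only [hfgw]
    exact setLIntegral_mul_rpow_le hg hw hS.compl hgS hwS ha hs
  have h_cancel : ENNReal.ofReal (t ^ (-(1 / a'))) * ENNReal.ofReal (a * (1 / t) ^ (-(1 / a'))) =
      ENNReal.ofReal a := by
    rw [← ENNReal.ofReal_mul (by positivity), mul_left_comm, ← Real.mul_rpow ht.le hs.le,
      mul_one_div_cancel ht.ne', Real.one_rpow, mul_one]
  calc erearr ν φ t
      ≤ A * (2 * I) + ENNReal.ofReal (t ^ (-(1 / a'))) *
          (B * (ENNReal.ofReal (a * (1 / t) ^ (-(1 / a'))) * I + J)) := by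
        refine (hT.erearr_le_of_measurableSet ha.symm.pos hf1 hfa hφ hφT hS ht).trans ?_
        gcongr
    _ = A * (2 * I) + B * (ENNReal.ofReal (t ^ (-(1 / a'))) *
          ENNReal.ofReal (a * (1 / t) ^ (-(1 / a')))) * I +
          B * (ENNReal.ofReal (t ^ (-(1 / a'))) * J) := by ring
    _ = _ := by rw [h_cancel]; ring

end IsSubadditiveOfStrongTypes

end Operator

/-! ### A Hardy inequality with two measures -/

section Dyadic

lemma tsum_rpow_le_rpow_tsum {κ : Type*} (n : κ → ℝ≥0∞) {r : ℝ} (hr : 1 ≤ r) :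
    ∑' k, n k ^ r ≤ (∑' k, n k) ^ r := by
  calc ∑' k, n k ^ r = ∑' k, n k ^ (r - 1) * n k := by
        simp only [← rpow_eq_rpow_sub_one_mul hr]
    _ ≤ ∑' k, (∑' j, n j) ^ (r - 1) * n k := ENNReal.tsum_le_tsum fun k ↦ mul_le_mul_left
        (ENNReal.rpow_le_rpow (ENNReal.le_tsum k) (sub_nonneg.2 hr)) _
    _ = (∑' k, n k) ^ r := by rw [ENNReal.tsum_mul_left, ← rpow_eq_rpow_sub_one_mul hr]

/-- The dyadic interval `(2 ^ k, 2 ^ (k + 1)]` of extended nonnegative reals. -/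
def dyadicIoc (k : ℤ) : Set ℝ≥0∞ := Ioc (2 ^ k) (2 ^ (k + 1))

lemma measurableSet_dyadicIoc (k : ℤ) : MeasurableSet (dyadicIoc k) := measurableSet_Ioc

lemma two_zpow_add_one (k : ℤ) : (2 : ℝ≥0∞) ^ (k + 1) = 2 * 2 ^ k := by
  rw [ENNReal.zpow_add two_ne_zero ENNReal.ofNat_ne_top, zpow_one, mul_comm]

lemma pairwise_disjoint_dyadicIoc : Pairwise (Function.onFun Disjoint dyadicIoc) := by
  have h_mono : Monotone fun k : ℤ ↦ (2 : ℝ≥0∞) ^ k := fun _ _ h ↦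
    ENNReal.zpow_le_of_le one_le_two h
  exact h_mono.pairwise_disjoint_on_Ioc_succ

variable {Z : Type*} [MeasurableSpace Z] {η : Measure Z}

lemma lintegral_rpow_le_tsum_dyadicIoc {F : Z → ℝ≥0∞} (hF : AEMeasurable F η)
    (hF_top : ∀ᵐ z ∂η, F z ≠ ⊤) {q : ℝ} (hq : 0 < q) :
    ∫⁻ z, F z ^ q ∂η ≤ ∑' k : ℤ, ((2 : ℝ≥0∞) ^ (k + 1)) ^ q * η (F ⁻¹' dyadicIoc k) := by
  have h_meas (k : ℤ) : NullMeasurableSet (F ⁻¹' dyadicIoc k) η :=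
    hF.nullMeasurableSet_preimage (measurableSet_dyadicIoc k)
  calc ∫⁻ z, F z ^ q ∂η
      ≤ ∫⁻ z, ∑' k : ℤ,
          (F ⁻¹' dyadicIoc k).indicator (fun _ ↦ ((2 : ℝ≥0∞) ^ (k + 1)) ^ q) z ∂η := by
        refine lintegral_mono_ae (hF_top.mono fun z hz ↦ ?_)
        rcases eq_or_ne (F z) 0 with h0 | h0
        · simp [h0, hq]
        obtain ⟨k, hk⟩ := ENNReal.exists_mem_Ioc_zpow h0 hz one_lt_two ENNReal.ofNat_ne_top
        refine le_trans ?_ (ENNReal.le_tsum k)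
        rw [indicator_of_mem (show z ∈ F ⁻¹' dyadicIoc k from hk)]
        exact ENNReal.rpow_le_rpow hk.2 hq.le
    _ = _ := by
        rw [lintegral_tsum fun k ↦ aemeasurable_const.indicator₀ (h_meas k)]
        simp only [lintegral_indicator_const₀ (h_meas _)]

lemma tsum_setLIntegral_dyadicIoc_le {G : Z → ℝ≥0∞} (hG : Measurable G) (n : Z → ℝ≥0∞) :
    ∑' k, ∫⁻ z in G ⁻¹' dyadicIoc k, n z ∂η ≤ ∫⁻ z, n z ∂η := by
  rw [← lintegral_iUnion (fun k ↦ hG (measurableSet_dyadicIoc k))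
    fun i j hij ↦ (pairwise_disjoint_dyadicIoc hij).preimage G]
  exact setLIntegral_le_lintegral _ _

end Dyadic

section Cofinal

variable {Z ι : Type*} [MeasurableSpace Z] [LinearOrder ι] [TopologicalSpace ι]
  [OrderClosedTopology ι] [SecondCountableTopology ι]

lemma measure_le_of_forall_measure_le {η : Measure Z} {b : Z → ι} {L : Set Z} {c : ℝ≥0∞}
    (h : ∀ z ∈ L, η {z' | b z ≤ b z'} ≤ c) : η L ≤ c := by
  obtain ⟨D, hD_count, hD_dense, hD_bot, -⟩ := exists_countable_dense_bot_top (b '' L)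
  have h_cover : L ⊆ ⋃ s ∈ D, {z | (s : ι) ≤ b z} := fun z hz ↦ by
    obtain ⟨s, hs, hle⟩ := hD_dense.exists_le' hD_bot ⟨b z, mem_image_of_mem b hz⟩
    exact mem_biUnion hs hle
  have h_directed : DirectedOn (Function.onFun (· ⊆ ·) fun s : b '' L ↦ {z | (s : ι) ≤ b z}) D := by
    intro s hs t ht
    rcases le_total s t with hst | hst
    exacts [⟨s, hs, subset_rfl, fun z hz ↦ (Subtype.coe_le_coe.2 hst).trans hz⟩,
      ⟨t, ht, fun z hz ↦ (Subtype.coe_le_coe.2 hst).trans hz, subset_rfl⟩]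
  refine (measure_mono h_cover).trans ?_
  rw [measure_biUnion_eq_iSup hD_count h_directed]
  refine iSup₂_le fun s _ ↦ ?_
  obtain ⟨z, hz, hs⟩ := s.2
  exact hs ▸ h z hz

lemma measure_setOf_measure_le_le (ρ : Measure Z) (α : Z → ι) (c : ℝ≥0∞) :
    ρ {y | ρ {y' | α y' ≤ α y} ≤ c} ≤ c :=
  measure_le_of_forall_measure_le (b := fun y ↦ OrderDual.toDual (α y)) fun _ hy ↦ hy

/-- Points with `G y = ρ {α ≤ α y} ≤ c` carry mass at most `c`, so the rest of `{α < s}` carries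
at least `c` when `{α < s}` has mass more than `2c`. -/
lemma le_measure_inter_of_two_mul_lt (ρ : Measure Z) (α : Z → ι) {c d : ℝ≥0∞} (hc : c ≠ ⊤)
    {s : ι} (hs : ρ {y | α y < s} ∈ Ioc (2 * c) d) :
    c ≤ ρ ({y | α y < s} ∩ {y | ρ {y' | α y' ≤ α y} ∈ Ioc c d}) := by
  have h_subset : {y | α y < s} ⊆ {y | ρ {y' | α y' ≤ α y} ≤ c} ∪
      ({y | α y < s} ∩ {y | ρ {y' | α y' ≤ α y} ∈ Ioc c d}) := fun y hy ↦ by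
    rcases le_or_gt (ρ {y' | α y' ≤ α y}) c with h | h
    · exact Or.inl h
    · exact Or.inr ⟨hy, h, (measure_mono fun _ hy' ↦ lt_of_le_of_lt hy' hy).trans hs.2⟩
  refine (ENNReal.add_le_add_iff_left hc).1 ?_
  calc c + c = 2 * c := (two_mul c).symm
    _ ≤ ρ {y | α y < s} := hs.1.le
    _ ≤ _ := (measure_mono h_subset).trans (measure_union_le _ _)
    _ ≤ _ := by gcongr; exact measure_setOf_measure_le_le ρ α c

end Cofinal

section Measurability

variable {Y ι : Type*} [MeasurableSpace Y] [LinearOrder ι] [TopologicalSpace ι]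
  [OrderClosedTopology ι] [MeasurableSpace ι] [BorelSpace ι]

lemma measurable_measure_setOf_lt (ρ : Measure Y) (α : Y → ι) :
    Measurable fun s ↦ ρ {y | α y < s} :=
  Monotone.measurable fun _ _ hst ↦ measure_mono fun _ hy ↦ lt_of_lt_of_le hy hst

lemma measurable_measure_setOf_le (ρ : Measure Y) (α : Y → ι) :
    Measurable fun s ↦ ρ {y | α y ≤ s} :=
  Monotone.measurable fun _ _ hst ↦ measure_mono fun _ hy ↦ le_trans hy hst

end Measurability

section Hardy

variable {Z Y ι : Type*} [MeasurableSpace Z] [MeasurableSpace Y] [LinearOrder ι]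
  [TopologicalSpace ι] [OrderTopology ι] [SecondCountableTopology ι] [MeasurableSpace ι]
  [BorelSpace ι] {η : Measure Z} {m ρ : Measure Y} {b : Z → ι} {α : Y → ι} {γ ψ : Y → ℝ≥0∞}
  {p p' q : ℝ} {c d M : ℝ≥0∞}

lemma mul_measure_rpow_le (hα : Measurable α) (hγ : AEMeasurable γ m) (hψ : AEMeasurable ψ m)
    (hp : p.HolderConjugate p') (hq : 0 < q)
    (hM : ∀ s, η {z | s ≤ b z} ^ (1 / q) * (∫⁻ y in {y | α y < s}, ψ y ^ p' ∂m) ^ (1 / p') ≤ M)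
    (hρ : ρ = m.withDensity fun y ↦ γ y * ψ y) (hc0 : c ≠ 0) (hc : c ≠ ⊤) :
    c * η {z | ρ {y | α y < b z} ∈ Ioc (2 * c) d} ^ (1 / q) ≤
      M * (∫⁻ y in {y | ρ {y' | α y' ≤ α y} ∈ Ioc c d}, γ y ^ p ∂m) ^ (1 / p) := by
  set R := {y | ρ {y' | α y' ≤ α y} ∈ Ioc c d}
  set N := (∫⁻ y in R, γ y ^ p ∂m) ^ (1 / p)
  have hR : MeasurableSet R := ((measurable_measure_setOf_le ρ α).comp hα) measurableSet_Ioc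
  have h_slice : ∀ z, ρ {y | α y < b z} ∈ Ioc (2 * c) d →
      c * η {z' | b z ≤ b z'} ^ (1 / q) ≤ M * N := fun z hz ↦ by
    have hS : MeasurableSet {y | α y < b z} := hα measurableSet_Iio
    have h_holder : c ≤ N * (∫⁻ y in {y | α y < b z}, ψ y ^ p' ∂m) ^ (1 / p') :=
      calc c ≤ ρ ({y | α y < b z} ∩ R) := le_measure_inter_of_two_mul_lt ρ α hc hz
        _ = ∫⁻ y in {y | α y < b z} ∩ R, γ y * ψ y ∂m := by
            rw [hρ, withDensity_apply _ (hS.inter hR)]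
        _ ≤ _ := ENNReal.lintegral_mul_le_Lp_mul_Lq _ hp hγ.restrict hψ.restrict
        _ ≤ _ := mul_le_mul'
            (ENNReal.rpow_le_rpow (lintegral_mono_set inter_subset_right) hp.one_div_nonneg)
            (ENNReal.rpow_le_rpow (lintegral_mono_set inter_subset_left) hp.symm.one_div_nonneg)
    calc c * η {z' | b z ≤ b z'} ^ (1 / q)
        ≤ N * (∫⁻ y in {y | α y < b z}, ψ y ^ p' ∂m) ^ (1 / p') *
            η {z' | b z ≤ b z'} ^ (1 / q) := by gcongr
      _ = η {z' | b z ≤ b z'} ^ (1 / q) *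
            (∫⁻ y in {y | α y < b z}, ψ y ^ p' ∂m) ^ (1 / p') * N := by ring
      _ ≤ M * N := by gcongr; exact hM (b z)
  simp only [one_div, mul_comm c, ← ENNReal.le_div_iff_mul_le (.inl hc0) (.inl hc),
    ENNReal.rpow_inv_le_iff hq] at h_slice ⊢
  exact measure_le_of_forall_measure_le h_slice

lemma ae_measure_lt_ne_top (hα : Measurable α) (hγ : AEMeasurable γ m) (hψ : AEMeasurable ψ m)
    (hp : p.HolderConjugate p') (hq : 0 < q)
    (hM : ∀ s, η {z | s ≤ b z} ^ (1 / q) * (∫⁻ y in {y | α y < s}, ψ y ^ p' ∂m) ^ (1 / p') ≤ M)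
    (h_fin : M * (∫⁻ y, γ y ^ p ∂m) ^ (1 / p) ≠ ⊤) (hρ : ρ = m.withDensity fun y ↦ γ y * ψ y) :
    ∀ᵐ z ∂η, ρ {y | α y < b z} ≠ ⊤ := by
  have h_le (n : ℕ) : (n + 1 : ℕ) * η {z | ρ {y | α y < b z} = ⊤} ^ (1 / q) ≤
      M * (∫⁻ y, γ y ^ p ∂m) ^ (1 / p) := by
    have hn : ((n + 1 : ℕ) : ℝ≥0∞) ≠ ⊤ := ENNReal.natCast_ne_top _
    calc (n + 1 : ℕ) * η {z | ρ {y | α y < b z} = ⊤} ^ (1 / q)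
        ≤ (n + 1 : ℕ) * η {z | ρ {y | α y < b z} ∈ Ioc (2 * ((n + 1 : ℕ) : ℝ≥0∞)) ⊤} ^ (1 / q) := by
          gcongr with z hz
          exact fun hz ↦ ⟨hz ▸ ENNReal.mul_lt_top ENNReal.ofNat_lt_top hn.lt_top, le_top⟩
      _ ≤ _ := mul_measure_rpow_le hα hγ hψ hp hq hM hρ (by simp) hn
      _ ≤ _ := by
          have := hp.one_div_nonneg
          gcongr
          exact Measure.restrict_le_self
  by_contra h_pos
  have h_ne : η {z | ρ {y | α y < b z} = ⊤} ^ (1 / q) ≠ 0 := by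
    simpa [ae_iff, ENNReal.rpow_eq_zero_iff, hq, hq.le, not_lt_of_ge] using h_pos
  obtain ⟨n, hn⟩ := ENNReal.exists_nat_mul_gt h_ne h_fin
  exact ((hn.trans_le (by gcongr; simp)).trans_le (h_le n)).false

lemma two_zpow_rpow_mul_measure_le (hα : Measurable α) (hγ : AEMeasurable γ m)
    (hψ : AEMeasurable ψ m) (hp : p.HolderConjugate p') (hq : 0 < q)
    (hM : ∀ s, η {z | s ≤ b z} ^ (1 / q) * (∫⁻ y in {y | α y < s}, ψ y ^ p' ∂m) ^ (1 / p') ≤ M)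
    (hρ : ρ = m.withDensity fun y ↦ γ y * ψ y) (k : ℤ) :
    ((2 : ℝ≥0∞) ^ (k + 1)) ^ q * η ((fun z ↦ ρ {y | α y < b z}) ⁻¹' dyadicIoc k) ≤
      (4 * M) ^ q * ((∫⁻ y in (fun y ↦ ρ {y' | α y' ≤ α y}) ⁻¹' dyadicIoc (k - 1), γ y ^ p ∂m) +
        ∫⁻ y in (fun y ↦ ρ {y' | α y' ≤ α y}) ⁻¹' dyadicIoc k, γ y ^ p ∂m) ^ (q / p) := by
  set G : Y → ℝ≥0∞ := fun y ↦ ρ {y' | α y' ≤ α y}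
  set F : Z → ℝ≥0∞ := fun z ↦ ρ {y | α y < b z}
  set c : ℝ≥0∞ := 2 ^ (k - 1)
  have h_two_c : (2 : ℝ≥0∞) ^ k = 2 * c := by
    rw [← two_zpow_add_one, sub_add_cancel]
  have h_four_c : (2 : ℝ≥0∞) ^ (k + 1) = 4 * c := by
    rw [two_zpow_add_one, h_two_c, ← mul_assoc]; norm_num
  have h_union : Ioc c (2 ^ (k + 1)) ⊆ dyadicIoc (k - 1) ∪ dyadicIoc k := by
    rw [dyadicIoc, dyadicIoc, sub_add_cancel]
    exact Ioc_subset_Ioc_union_Ioc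
  have h_block : c * η (F ⁻¹' dyadicIoc k) ^ (1 / q) ≤
      M * ((∫⁻ y in G ⁻¹' dyadicIoc (k - 1), γ y ^ p ∂m) +
        ∫⁻ y in G ⁻¹' dyadicIoc k, γ y ^ p ∂m) ^ (1 / p) := by
    have h_eq : dyadicIoc k = Ioc (2 * c) (2 ^ (k + 1)) := by rw [dyadicIoc, h_two_c]
    have h_preimage : F ⁻¹' dyadicIoc k = {z | F z ∈ Ioc (2 * c) (2 ^ (k + 1))} := by rw [h_eq]; rfl
    rw [h_preimage]
    refine (mul_measure_rpow_le hα hγ hψ hp hq hM hρ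
      (ENNReal.zpow_pos two_ne_zero ENNReal.ofNat_ne_top _).ne'
      (ENNReal.zpow_ne_top two_ne_zero ENNReal.ofNat_ne_top _)).trans ?_
    have := hp.one_div_nonneg
    gcongr
    exact (lintegral_mono_set (preimage_mono h_union)).trans (lintegral_union_le _ _ _)
  calc ((2 : ℝ≥0∞) ^ (k + 1)) ^ q * η (F ⁻¹' dyadicIoc k)
      = (4 * (c * η (F ⁻¹' dyadicIoc k) ^ (1 / q))) ^ q := by
        rw [h_four_c, ← mul_assoc, ENNReal.mul_rpow_of_nonneg (4 * c) _ hq.le, ← ENNReal.rpow_mul,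
          one_div_mul_cancel hq.ne', ENNReal.rpow_one]
    _ ≤ (4 * (M * ((∫⁻ y in G ⁻¹' dyadicIoc (k - 1), γ y ^ p ∂m) +
        ∫⁻ y in G ⁻¹' dyadicIoc k, γ y ^ p ∂m) ^ (1 / p))) ^ q := by gcongr
    _ = _ := by
        rw [← mul_assoc, ENNReal.mul_rpow_of_nonneg _ _ hq.le, ← ENNReal.rpow_mul,
          one_div_mul_eq_div]

lemma tsum_add_setLIntegral_dyadicIoc_rpow_le {G : Y → ℝ≥0∞} (hG : Measurable G) (n : Y → ℝ≥0∞)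
    {r : ℝ} (hr : 1 ≤ r) :
    ∑' k, ((∫⁻ y in G ⁻¹' dyadicIoc (k - 1), n y ∂m) + ∫⁻ y in G ⁻¹' dyadicIoc k, n y ∂m) ^ r ≤
      (2 * ∫⁻ y, n y ∂m) ^ r := by
  refine (tsum_rpow_le_rpow_tsum _ hr).trans (ENNReal.rpow_le_rpow ?_ (zero_le_one.trans hr))
  have h_shift : ∑' k, ∫⁻ y in G ⁻¹' dyadicIoc (k - 1), n y ∂m =
      ∑' k, ∫⁻ y in G ⁻¹' dyadicIoc k, n y ∂m :=
    (Equiv.subRight (1 : ℤ)).tsum_eq fun k ↦ ∫⁻ y in G ⁻¹' dyadicIoc k, n y ∂m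
  rw [ENNReal.tsum_add, two_mul, h_shift]
  exact add_le_add (tsum_setLIntegral_dyadicIoc_le hG n) (tsum_setLIntegral_dyadicIoc_le hG n)

lemma lintegral_setLIntegral_lt_rpow_le (hb : Measurable b) (hα : Measurable α)
    (hγ : AEMeasurable γ m) (hψ : AEMeasurable ψ m) (hp : p.HolderConjugate p') (hpq : p ≤ q)
    (hM : ∀ s, η {z | s ≤ b z} ^ (1 / q) * (∫⁻ y in {y | α y < s}, ψ y ^ p' ∂m) ^ (1 / p') ≤ M) :
    (∫⁻ z, (∫⁻ y in {y | α y < b z}, γ y * ψ y ∂m) ^ q ∂η) ^ (1 / q) ≤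
      8 * M * (∫⁻ y, γ y ^ p ∂m) ^ (1 / p) := by
  have hq : 0 < q := hp.pos.trans_le hpq
  by_cases h_fin : M * (∫⁻ y, γ y ^ p ∂m) ^ (1 / p) = ⊤
  · rw [mul_assoc, h_fin, ENNReal.mul_top (by norm_num)]
    exact le_top
  set ρ := m.withDensity fun y ↦ γ y * ψ y with hρ
  set F : Z → ℝ≥0∞ := fun z ↦ ρ {y | α y < b z}
  set G : Y → ℝ≥0∞ := fun y ↦ ρ {y' | α y' ≤ α y}
  set N := ∫⁻ y, γ y ^ p ∂m
  have hF : Measurable F := (measurable_measure_setOf_lt ρ α).comp hb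
  have hG : Measurable G := (measurable_measure_setOf_le ρ α).comp hα
  have hF_eq (z : Z) : ∫⁻ y in {y | α y < b z}, γ y * ψ y ∂m = F z :=
    (withDensity_apply _ (hα measurableSet_Iio)).symm
  have hF_top : ∀ᵐ z ∂η, F z ≠ ⊤ := ae_measure_lt_ne_top hα hγ hψ hp hq hM h_fin hρ
  have h_sum : ∫⁻ z, F z ^ q ∂η ≤ (4 * M) ^ q * (2 * N) ^ (q / p) :=
    calc ∫⁻ z, F z ^ q ∂η
        ≤ ∑' k : ℤ, ((2 : ℝ≥0∞) ^ (k + 1)) ^ q * η (F ⁻¹' dyadicIoc k) :=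
          lintegral_rpow_le_tsum_dyadicIoc hF.aemeasurable hF_top hq
      _ ≤ ∑' k : ℤ, (4 * M) ^ q * ((∫⁻ y in G ⁻¹' dyadicIoc (k - 1), γ y ^ p ∂m) +
            ∫⁻ y in G ⁻¹' dyadicIoc k, γ y ^ p ∂m) ^ (q / p) :=
          ENNReal.tsum_le_tsum (two_zpow_rpow_mul_measure_le hα hγ hψ hp hq hM hρ)
      _ ≤ _ := by
          rw [ENNReal.tsum_mul_left]
          gcongr
          exact tsum_add_setLIntegral_dyadicIoc_rpow_le hG _ ((one_le_div hp.pos).2 hpq)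
  have h_two : (2 : ℝ≥0∞) ^ (1 / p) ≤ 2 :=
    (ENNReal.rpow_le_rpow_of_exponent_le one_le_two ((div_le_one hp.pos).2 hp.lt.le)).trans_eq
      (ENNReal.rpow_one 2)
  calc (∫⁻ z, (∫⁻ y in {y | α y < b z}, γ y * ψ y ∂m) ^ q ∂η) ^ (1 / q)
      ≤ ((4 * M) ^ q * (2 * N) ^ (q / p)) ^ (1 / q) := by simp only [hF_eq]; gcongr
    _ = 4 * M * (2 ^ (1 / p) * N ^ (1 / p)) := by
        rw [ENNReal.mul_rpow_of_nonneg _ _ (one_div_nonneg.2 hq.le), ← ENNReal.rpow_mul,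
          ← ENNReal.rpow_mul, mul_one_div_cancel hq.ne', ENNReal.rpow_one, div_mul_div_comm,
          mul_one, mul_comm p q, ← div_div, div_self hq.ne',
          ENNReal.mul_rpow_of_nonneg _ _ hp.one_div_nonneg]
    _ ≤ 4 * M * (2 * N ^ (1 / p)) := by gcongr
    _ = 8 * M * N ^ (1 / p) := by ring

end Hardy

section WeightedHardy

variable {Z Y ι : Type*} [MeasurableSpace Z] [MeasurableSpace Y] [LinearOrder ι]
  [TopologicalSpace ι] [OrderTopology ι] [SecondCountableTopology ι] [MeasurableSpace ι]
  [BorelSpace ι] {κ : Measure Z} {m : Measure Y} {b : Z → ι} {α : Y → ι} {ξ : Z → ℝ≥0∞}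
  {γ ψ : Y → ℝ≥0∞} {U H W : ℝ → ℝ≥0∞} {p p' q : ℝ} {M : ℝ≥0∞}

lemma lintegral_mul_setLIntegral_lt_rpow_le (hb : Measurable b) (hα : Measurable α)
    (hξ : AEMeasurable ξ κ) (hγ : AEMeasurable γ m) (hψ : AEMeasurable ψ m)
    (hp : p.HolderConjugate p') (hpq : p ≤ q)
    (hM : ∀ s, (∫⁻ z in {z | s ≤ b z}, ξ z ^ q ∂κ) ^ (1 / q) *
      (∫⁻ y in {y | α y < s}, ψ y ^ p' ∂m) ^ (1 / p') ≤ M) :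
    (∫⁻ z, (ξ z * ∫⁻ y in {y | α y < b z}, γ y * ψ y ∂m) ^ q ∂κ) ^ (1 / q) ≤
      8 * M * (∫⁻ y, γ y ^ p ∂m) ^ (1 / p) := by
  have hq : 0 ≤ q := hp.nonneg.trans hpq
  have h_inner : Measurable fun z ↦ ∫⁻ y in {y | α y < b z}, γ y * ψ y ∂m :=
    (Monotone.measurable (f := fun s ↦ ∫⁻ y in {y | α y < s}, γ y * ψ y ∂m) fun _ _ hst ↦
      lintegral_mono_set fun _ hy ↦ lt_of_lt_of_le hy hst).comp hb
  have h_density : ∫⁻ z, (ξ z * ∫⁻ y in {y | α y < b z}, γ y * ψ y ∂m) ^ q ∂κ =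
      ∫⁻ z, (∫⁻ y in {y | α y < b z}, γ y * ψ y ∂m) ^ q ∂κ.withDensity fun z ↦ ξ z ^ q := by
    simp only [ENNReal.mul_rpow_of_nonneg _ _ hq]
    exact (lintegral_withDensity_eq_lintegral_mul₀ (hξ.pow_const q)
      (h_inner.pow_const q).aemeasurable).symm
  rw [h_density]
  refine lintegral_setLIntegral_lt_rpow_le hb hα hγ hψ hp hpq fun s ↦ ?_
  have h_set : MeasurableSet {z | s ≤ b z} := hb measurableSet_Ici
  rw [withDensity_apply _ h_set]
  exact hM s

lemma lintegral_mul_setLIntegral_Ioo_one_div_rpow_le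
    (hU : AEMeasurable U (volume.restrict (Ioi 0))) (hH : AEMeasurable H (volume.restrict (Ioi 0)))
    (hW : AEMeasurable W (volume.restrict (Ioi 0))) (hp : p.HolderConjugate p') (hpq : p ≤ q)
    (hM : ∀ s, 0 < s → (∫⁻ t in Ioo 0 (1 / s), U t ^ q) ^ (1 / q) *
      (∫⁻ r in Ioo 0 s, W r ^ p') ^ (1 / p') ≤ M) :
    (∫⁻ t in Ioi 0, (U t * ∫⁻ r in Ioo 0 (1 / t), H r * W r) ^ q) ^ (1 / q) ≤
      8 * M * (∫⁻ r in Ioi 0, H r ^ p) ^ (1 / p) := by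
  have h_restrict (s : ℝ) : (volume.restrict (Ioi 0)).restrict {r | r < s} =
      volume.restrict (Ioo 0 s) :=
    (Measure.restrict_restrict measurableSet_Iio).trans (congrArg _ (inter_comm _ _))
  have h_inv : Measurable fun t : ℝ ↦ 1 / t := by fun_prop
  have h_hardy := lintegral_mul_setLIntegral_lt_rpow_le h_inv measurable_id' hU hH hW hp hpq
    (M := M) ?_
  · simpa only [h_restrict] using h_hardy
  intro s
  have h_set : MeasurableSet {t : ℝ | s ≤ 1 / t} := h_inv measurableSet_Ici
  rw [h_restrict, Measure.restrict_restrict h_set]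
  rcases le_or_gt s 0 with hs | hs
  · simp [Ioo_eq_empty (not_lt.2 hs), hp.symm.pos]
  have h_Ioc : {t : ℝ | s ≤ 1 / t} ∩ Ioi 0 = Ioc 0 (1 / s) := by
    ext t
    exact ⟨fun ⟨hst, ht⟩ ↦ ⟨ht, (le_one_div hs ht).1 hst⟩,
      fun ⟨ht, hts⟩ ↦ ⟨(le_one_div hs ht).2 hts, ht⟩⟩
  rw [h_Ioc, setLIntegral_congr Ioo_ae_eq_Ioc.symm]
  exact hM s hs

lemma lintegral_mul_setLIntegral_Ioi_one_div_rpow_le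
    (hU : AEMeasurable U (volume.restrict (Ioi 0))) (hH : AEMeasurable H (volume.restrict (Ioi 0)))
    (hW : AEMeasurable W (volume.restrict (Ioi 0))) (hp : p.HolderConjugate p') (hpq : p ≤ q)
    (hM : ∀ s, 0 < s → (∫⁻ t in Ioi (1 / s), U t ^ q) ^ (1 / q) *
      (∫⁻ r in Ioi s, W r ^ p') ^ (1 / p') ≤ M) :
    (∫⁻ t in Ioi 0, (U t * ∫⁻ r in Ioi (1 / t), H r * W r) ^ q) ^ (1 / q) ≤
      8 * M * (∫⁻ r in Ioi 0, H r ^ p) ^ (1 / p) := by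
  have h_inv : Measurable fun r : ℝ ↦ 1 / r := by fun_prop
  have h_restrict (s : ℝ) : (volume.restrict (Ioi 0)).restrict {r | 1 / r < s} =
      volume.restrict ({r | 1 / r < s} ∩ Ioi 0) :=
    Measure.restrict_restrict (h_inv measurableSet_Iio)
  have h_Ioi {s : ℝ} (hs : 0 < s) : {r | 1 / r < s} ∩ Ioi 0 = Ioi (1 / s) := by
    ext r
    exact ⟨fun ⟨hrs, hr⟩ ↦ (one_div_lt hr hs).1 hrs, fun hr ↦
      have hr0 : 0 < r := (one_div_pos.2 hs).trans hr
      ⟨(one_div_lt hr0 hs).2 hr, hr0⟩⟩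
  have h_hardy := lintegral_mul_setLIntegral_lt_rpow_le measurable_id' h_inv hU hH hW hp hpq
    (M := M) ?_
  · simp only [h_restrict] at h_hardy
    refine (ENNReal.rpow_le_rpow (le_of_eq (setLIntegral_congr_fun measurableSet_Ioi fun t ht ↦ ?_))
      (one_div_nonneg.2 (hp.nonneg.trans hpq))).trans h_hardy
    simp only [h_Ioi ht]
  intro s
  rw [h_restrict]
  rcases le_or_gt s 0 with hs | hs
  · have h_empty : {r : ℝ | 1 / r < s} ∩ Ioi 0 = ∅ :=
      eq_empty_of_forall_notMem fun r ⟨hrs, hr⟩ ↦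
        (hrs.trans_le hs).not_gt (one_div_pos.2 hr)
    simp only [h_empty, Measure.restrict_empty, lintegral_zero_measure,
      ENNReal.zero_rpow_of_pos hp.symm.one_div_pos, mul_zero, zero_le]
  have h_Ici : {t | s ≤ t} ∩ Ioi 0 = Ici s := inter_eq_left.2 fun _ ht ↦ hs.trans_le ht
  have h_set : MeasurableSet {t | s ≤ t} := measurableSet_Ici
  rw [h_Ioi hs, Measure.restrict_restrict h_set, h_Ici,
    setLIntegral_congr Ioi_ae_eq_Ici.symm]
  simpa only [one_div_one_div] using hM (1 / s) (one_div_pos.2 hs)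

end WeightedHardy

section PowerWeights

variable {U H W : ℝ → ℝ≥0∞} {p p' q b : ℝ} {M N : ℝ≥0∞}

lemma rpow_mul_ofReal_rpow_neg_div (x : ℝ≥0∞) {t r : ℝ} (ht : 0 ≤ t) (hr : 0 ≤ r) (b : ℝ) :
    x ^ r * ENNReal.ofReal (t ^ (-(r / b))) = (x * ENNReal.ofReal (t ^ (-(1 / b)))) ^ r := by
  rw [ENNReal.mul_rpow_of_nonneg _ _ hr, ENNReal.ofReal_rpow_of_nonneg (Real.rpow_nonneg ht _) hr,
    ← Real.rpow_mul ht, neg_mul, one_div_mul_eq_div]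

lemma setLIntegral_Ioi_rpow_mul_ofReal_rpow_neg_div (U : ℝ → ℝ≥0∞) {s r : ℝ} (hs : 0 ≤ s)
    (hr : 0 ≤ r) (b : ℝ) :
    ∫⁻ t in Ioi s, U t ^ r * ENNReal.ofReal (t ^ (-(r / b))) =
      ∫⁻ t in Ioi s, (U t * ENNReal.ofReal (t ^ (-(1 / b)))) ^ r :=
  setLIntegral_congr_fun measurableSet_Ioi fun t ht ↦
    rpow_mul_ofReal_rpow_neg_div (U t) (hs.trans (mem_Ioi.1 ht).le) hr b

lemma lintegral_mul_rpow_neg_mul_setLIntegral_Ioi_one_div_rpow_le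
    (hU : AEMeasurable U (volume.restrict (Ioi 0))) (hH : AEMeasurable H (volume.restrict (Ioi 0)))
    (hW : AEMeasurable W (volume.restrict (Ioi 0))) (hp : p.HolderConjugate p') (hpq : p ≤ q)
    (hM : ∀ s, 0 < s →
      (∫⁻ t in Ioi (1 / s), U t ^ q * ENNReal.ofReal (t ^ (-(q / b)))) ^ (1 / q) *
        (∫⁻ r in Ioi s, W r ^ p' * ENNReal.ofReal (r ^ (-(p' / b)))) ^ (1 / p') ≤ M) :
    (∫⁻ t in Ioi 0, (U t * (ENNReal.ofReal (t ^ (-(1 / b))) *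
        ∫⁻ r in Ioi (1 / t), ENNReal.ofReal (r ^ (-(1 / b))) * (H r * W r))) ^ q) ^ (1 / q) ≤
      8 * M * (∫⁻ r in Ioi 0, H r ^ p) ^ (1 / p) := by
  have h_power : Measurable fun t : ℝ ↦ ENNReal.ofReal (t ^ (-(1 / b))) := by fun_prop
  have h_hardy := lintegral_mul_setLIntegral_Ioi_one_div_rpow_le (hU.mul h_power.aemeasurable) hH
    (hW.mul h_power.aemeasurable) hp hpq (M := M) fun s hs ↦ by
      have := hM s hs
      rwa [setLIntegral_Ioi_rpow_mul_ofReal_rpow_neg_div U (one_div_nonneg.2 hs.le)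
        (hp.nonneg.trans hpq), setLIntegral_Ioi_rpow_mul_ofReal_rpow_neg_div W hs.le
        hp.symm.nonneg] at this
  simpa only [Pi.mul_apply, mul_assoc, mul_left_comm, mul_comm] using h_hardy

lemma measurable_setLIntegral_Ioo_one_div (K : ℝ → ℝ≥0∞) :
    Measurable fun t : ℝ ↦ ∫⁻ r in Ioo 0 (1 / t), K r :=
  (Monotone.measurable (f := fun s ↦ ∫⁻ r in Ioo 0 s, K r) fun _ _ hst ↦
    lintegral_mono_set (Ioo_subset_Ioo_right hst)).comp (by fun_prop)

lemma measurable_setLIntegral_Ioi_one_div (K : ℝ → ℝ≥0∞) :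
    Measurable fun t : ℝ ↦ ∫⁻ r in Ioi (1 / t), K r :=
  (Antitone.measurable (f := fun s ↦ ∫⁻ r in Ioi s, K r) fun _ _ hst ↦
    lintegral_mono_set (Ioi_subset_Ioi hst)).comp (by fun_prop)

lemma lintegral_const_mul_add_const_mul_rpow_le {Z : Type*} [MeasurableSpace Z] {η : Measure Z}
    {F G : Z → ℝ≥0∞} (hF : AEMeasurable F η) (hG : AEMeasurable G η) (c d : ℝ≥0∞) {q : ℝ}
    (hq : 1 ≤ q) :
    (∫⁻ z, (c * F z + d * G z) ^ q ∂η) ^ (1 / q) ≤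
      c * (∫⁻ z, F z ^ q ∂η) ^ (1 / q) + d * (∫⁻ z, G z ^ q ∂η) ^ (1 / q) := by
  have hq0 : 0 < q := zero_lt_one.trans_le hq
  have h_const {K : Z → ℝ≥0∞} (hK : AEMeasurable K η) (e : ℝ≥0∞) :
      (∫⁻ z, (e * K z) ^ q ∂η) ^ (1 / q) = e * (∫⁻ z, K z ^ q ∂η) ^ (1 / q) := by
    simp only [ENNReal.mul_rpow_of_nonneg _ _ hq0.le]
    rw [lintegral_const_mul'' _ (hK.pow_const q),
      ENNReal.mul_rpow_of_nonneg _ _ (one_div_nonneg.2 hq0.le), ← ENNReal.rpow_mul,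
      mul_one_div_cancel hq0.ne', ENNReal.rpow_one]
  rw [← h_const hF, ← h_const hG]
  exact ENNReal.lintegral_Lp_add_le (hF.const_mul c) (hG.const_mul d) hq

lemma lintegral_mul_hardy_add_hardy_rpow_le (hU : Measurable U)
    (hH : AEMeasurable H (volume.restrict (Ioi 0))) (hW : AEMeasurable W (volume.restrict (Ioi 0)))
    (hp : p.HolderConjugate p') (hpq : p ≤ q)
    (hM : ∀ s, 0 < s → (∫⁻ t in Ioo 0 (1 / s), U t ^ q) ^ (1 / q) *
      (∫⁻ r in Ioo 0 s, W r ^ p') ^ (1 / p') ≤ M)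
    (hN : ∀ s, 0 < s →
      (∫⁻ t in Ioi (1 / s), U t ^ q * ENNReal.ofReal (t ^ (-(q / b)))) ^ (1 / q) *
        (∫⁻ r in Ioi s, W r ^ p' * ENNReal.ofReal (r ^ (-(p' / b)))) ^ (1 / p') ≤ N)
    (c d : ℝ≥0∞) :
    (∫⁻ t in Ioi 0, (U t * (c * (∫⁻ r in Ioo 0 (1 / t), H r * W r) +
        d * (ENNReal.ofReal (t ^ (-(1 / b))) * ∫⁻ r in Ioi (1 / t),
          ENNReal.ofReal (r ^ (-(1 / b))) * (H r * W r)))) ^ q) ^ (1 / q) ≤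
      (c * (8 * M) + d * (8 * N)) * (∫⁻ r in Ioi 0, H r ^ p) ^ (1 / p) := by
  have h_power : Measurable fun t : ℝ ↦ ENNReal.ofReal (t ^ (-(1 / b))) := by fun_prop
  simp only [mul_add, mul_left_comm (U _) c, mul_left_comm (U _) d]
  refine (lintegral_const_mul_add_const_mul_rpow_le
    (hU.mul (measurable_setLIntegral_Ioo_one_div _)).aemeasurable
    (hU.mul (h_power.mul (measurable_setLIntegral_Ioi_one_div _))).aemeasurable c d
    (hp.lt.le.trans hpq)).trans ?_
  rw [add_mul, mul_assoc c, mul_assoc d]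
  gcongr
  · exact lintegral_mul_setLIntegral_Ioo_one_div_rpow_le hU.aemeasurable hH hW hp hpq hM
  · exact lintegral_mul_rpow_neg_mul_setLIntegral_Ioi_one_div_rpow_le hU.aemeasurable hH hW hp
      hpq hN

end PowerWeights

/-! ### The weighted norm inequality -/

section WeightedNorm

variable {X Y E F : Type*} [MeasurableSpace X] [MeasurableSpace Y]
  [NormedAddCommGroup E] [NormedAddCommGroup F] {μ : Measure X} {ν : Measure Y}

lemma exists_measurable_le_lintegral_mul_rpow_eq {k : Y → ℝ≥0∞} (hk : Measurable k)
    (hk_top : ∀ y, k y ≠ ⊤) (ψ : Y → ℝ≥0∞) {q : ℝ} (hq : 0 < q) :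
    ∃ φ, Measurable φ ∧ φ ≤ ψ ∧ ∫⁻ y, (k y * ψ y) ^ q ∂ν = ∫⁻ y, (k y * φ y) ^ q ∂ν := by
  obtain ⟨h, h_meas, h_le, h_eq⟩ := exists_measurable_le_lintegral_eq ν fun y ↦ (k y * ψ y) ^ q
  have h_root (y : Y) : h y ^ (1 / q) ≤ k y * ψ y := by
    rw [one_div, ENNReal.rpow_inv_le_iff hq]
    exact h_le y
  have h_quotient : (fun y ↦ h y ^ (1 / q) / k y) ≤ ψ := fun y ↦
    ENNReal.div_le_of_le_mul' (h_root y)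
  refine ⟨fun y ↦ h y ^ (1 / q) / k y, (h_meas.pow_const _).div hk, h_quotient,
    le_antisymm ?_ (lintegral_mono fun y ↦ by gcongr; exact h_quotient y)⟩
  rw [h_eq]
  refine lintegral_mono fun y ↦ ?_
  have h_zero (h0 : k y = 0) : h y ^ (1 / q) = 0 := by
    simpa only [h0, zero_mul, nonpos_iff_eq_zero] using h_root y
  rw [ENNReal.mul_div_cancel' h_zero fun h_top ↦ (hk_top y h_top).elim, ← ENNReal.rpow_mul,
    one_div_mul_cancel hq.ne', ENNReal.rpow_one]

lemma IsSubadditiveOfStrongTypes.lintegral_mul_rpow_le {a a' p p' q : ℝ} {A B : NNReal}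
    {T : (X → E) → Y → F} (hT : IsSubadditiveOfStrongTypes μ ν a a' A B T)
    (ha : a.HolderConjugate a') (hp : p.HolderConjugate p') (hpq : p ≤ q) {f : X → E}
    (hf1 : MemLp f 1 μ) (hfa : MemLp f (ENNReal.ofReal a) μ) {g w : X → ℝ≥0∞}
    (hg : AEMeasurable g μ) (hw : AEMeasurable w μ) (hfgw : ∀ x, ‖f x‖ₑ = g x * w x)
    {k φ : Y → ℝ≥0∞} (hk : AEMeasurable k ν) (hφ : AEMeasurable φ ν)
    (hφT : ∀ᵐ y ∂ν, φ y ≤ ‖T f y‖ₑ) {M N : ℝ≥0∞}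
    (hM : ∀ s, 0 < s → (∫⁻ t in Ioo 0 (1 / s), erearr ν k t ^ q) ^ (1 / q) *
      (∫⁻ t in Ioo 0 s, erearr μ w t ^ p') ^ (1 / p') ≤ M)
    (hN : ∀ s, 0 < s →
      (∫⁻ t in Ioi (1 / s), erearr ν k t ^ q * ENNReal.ofReal (t ^ (-(q / a')))) ^ (1 / q) *
        (∫⁻ t in Ioi s, erearr μ w t ^ p' * ENNReal.ofReal (t ^ (-(p' / a')))) ^ (1 / p') ≤ N) :
    (∫⁻ y, (k y * φ y) ^ q ∂ν) ^ (1 / q) ≤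
      ((2 * A + ENNReal.ofReal a * B) * (8 * M) + B * (8 * N)) *
        (∫⁻ x, g x ^ p ∂μ) ^ (1 / p) := by
  have hq : 0 < q := hp.pos.trans_le hpq
  have h_rearrange : ∫⁻ y, (k y * φ y) ^ q ∂ν ≤ ∫⁻ t in Ioi 0, (erearr ν k t *
      ((2 * A + ENNReal.ofReal a * B) * (∫⁻ r in Ioo 0 (1 / t), erearr μ g r * erearr μ w r) +
        B * (ENNReal.ofReal (t ^ (-(1 / a'))) * ∫⁻ r in Ioi (1 / t),
          ENNReal.ofReal (r ^ (-(1 / a'))) * (erearr μ g r * erearr μ w r)))) ^ q := by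
    refine (lintegral_mul_rpow_le_lintegral_erearr_mul_rpow hk hφ hq).trans
      (setLIntegral_mono' measurableSet_Ioi fun t ht ↦ ENNReal.rpow_le_rpow ?_ hq.le)
    exact mul_le_mul_right (hT.erearr_le ha hf1 hfa hg hw hfgw hφ hφT ht) _
  rw [← lintegral_erearr_rpow hg hp.pos]
  exact (ENNReal.rpow_le_rpow h_rearrange (one_div_nonneg.2 hq.le)).trans <|
    lintegral_mul_hardy_add_hardy_rpow_le (measurable_erearr ν k)
      (measurable_erearr μ g).aemeasurable (measurable_erearr μ w).aemeasurable hp hpq hM hN _ _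

end WeightedNorm

theorem stmt2_general {X Y E F : Type*} [MeasurableSpace X] [MeasurableSpace Y]
    [NormedAddCommGroup E] [NormedAddCommGroup F] {μ : Measure X} {ν : Measure Y}
    {a a' p p' q : ℝ} {A B : NNReal} {T : (X → E) → Y → F}
    (hT : IsSubadditiveOfStrongTypes μ ν a a' A B T) (ha : a.HolderConjugate a')
    (hp : p.HolderConjugate p') (hpq : p ≤ q) {u : Y → ℝ} {v : X → ℝ} (hu : Measurable u)
    (hv : AEMeasurable v μ) (hu0 : ∀ y, 0 ≤ u y) (hv0 : ∀ x, 0 < v x)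
    (hloc : ∃ M : ℝ, ∀ s : ℝ, 0 < s →
      (∫⁻ t in Ioo 0 (1 / s), rearr ν u t ^ q) ^ (1 / q) *
        (∫⁻ t in Ioo 0 s, rearr μ (fun x ↦ 1 / v x) t ^ p') ^ (1 / p') ≤ ENNReal.ofReal M)
    (hglo : ∃ M : ℝ, ∀ s : ℝ, 0 < s →
      (∫⁻ t in Ioi (1 / s), rearr ν u t ^ q * ENNReal.ofReal (t ^ (-(q / a')))) ^ (1 / q) *
        (∫⁻ t in Ioi s, rearr μ (fun x ↦ 1 / v x) t ^ p' *
          ENNReal.ofReal (t ^ (-(p' / a')))) ^ (1 / p') ≤ ENNReal.ofReal M) :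
    ∃ C : ℝ, 0 < C ∧ ∀ f : X → E, MemLp f 1 μ → MemLp f (ENNReal.ofReal a) μ →
      (∫⁻ y, (ENNReal.ofReal (u y) * ‖T f y‖ₑ) ^ q ∂ν) ^ (1 / q) ≤
        ENNReal.ofReal C * (∫⁻ x, (ENNReal.ofReal (v x) * ‖f x‖ₑ) ^ p ∂μ) ^ (1 / p) := by
  obtain ⟨M, hM⟩ := hloc
  obtain ⟨N, hN⟩ := hglo
  set C : ℝ≥0∞ := (2 * A + ENNReal.ofReal a * B) * (8 * ENNReal.ofReal M) +
    B * (8 * ENNReal.ofReal N)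
  have hC : C ≠ ⊤ := by finiteness
  refine ⟨C.toReal + 1, by positivity, fun f hf1 hfa ↦ ?_⟩
  obtain ⟨φ, hφ, hφT, h_eq⟩ := exists_measurable_le_lintegral_mul_rpow_eq (ν := ν)
    (by fun_prop : Measurable fun y ↦ ENNReal.ofReal |u y|) (fun _ ↦ ENNReal.ofReal_ne_top)
    (fun y ↦ ‖T f y‖ₑ) (hp.pos.trans_le hpq)
  have hfgw (x : X) : ‖f x‖ₑ = ENNReal.ofReal (v x) * ‖f x‖ₑ * ENNReal.ofReal |1 / v x| := by
    rw [mul_right_comm, ← ENNReal.ofReal_mul (hv0 x).le, abs_of_pos (one_div_pos.2 (hv0 x)),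
      mul_one_div_cancel (hv0 x).ne', ENNReal.ofReal_one, one_mul]
  calc (∫⁻ y, (ENNReal.ofReal (u y) * ‖T f y‖ₑ) ^ q ∂ν) ^ (1 / q)
      = (∫⁻ y, (ENNReal.ofReal |u y| * φ y) ^ q ∂ν) ^ (1 / q) := by
        rw [← h_eq]
        simp only [abs_of_nonneg (hu0 _)]
    _ ≤ C * (∫⁻ x, (ENNReal.ofReal (v x) * ‖f x‖ₑ) ^ p ∂μ) ^ (1 / p) :=
        hT.lintegral_mul_rpow_le ha hp hpq hf1 hfa (hv.ennreal_ofReal.mul hf1.1.enorm)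
          (by fun_prop) hfgw (by fun_prop) hφ.aemeasurable (.of_forall hφT) hM hN
    _ ≤ _ := by
        gcongr
        rw [ENNReal.le_ofReal_iff_toReal_le hC (by positivity)]
        exact le_add_of_nonneg_right zero_le_one

/-- weighted `(L^p, L^q)` inequality for sublinear operators of strong
types `(1,∞)` and `(a,a')`, via the rearrangement conditions on the weights. -/
theorem stmt2 {M₁ M₂ : Type*} [MeasurableSpace M₁] [MeasurableSpace M₂]
    (μ : Measure M₁) (ν : Measure M₂) [SigmaFinite μ] [SigmaFinite ν]
    (a a' : ℝ) (ha1 : 1 < a) (ha2 : a ≤ 2) (ha'def : a' = a / (a - 1))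
    (T : (M₁ → ℂ) → M₂ → ℂ)
    (A B : ℝ) (hA : 0 < A) (hB : 0 < B)
    (hsub : ∀ f g : M₁ → ℂ, MemLp f 1 μ → MemLp f (ENNReal.ofReal a) μ →
      MemLp g 1 μ → MemLp g (ENNReal.ofReal a) μ →
      ∀ᵐ y ∂ν, ‖T (f + g) y‖ ≤ ‖T f y‖ + ‖T g y‖)
    (hscal : ∀ f : M₁ → ℂ, MemLp f 1 μ → MemLp f (ENNReal.ofReal a) μ →
      ∀ c : ℂ, ∀ᵐ y ∂ν, ‖T (c • f) y‖ = ‖c‖ * ‖T f y‖)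
    (hweak : ∀ f : M₁ → ℂ, MemLp f 1 μ → MemLp f (ENNReal.ofReal a) μ →
      eLpNorm (T f) ⊤ ν ≤ ENNReal.ofReal A * eLpNorm f 1 μ)
    (hstrong : ∀ f : M₁ → ℂ, MemLp f 1 μ → MemLp f (ENNReal.ofReal a) μ →
      eLpNorm (T f) (ENNReal.ofReal a') ν ≤ ENNReal.ofReal B * eLpNorm f (ENNReal.ofReal a) μ)
    (u : M₂ → ℝ) (v : M₁ → ℝ) (hu : Measurable u) (hv : Measurable v)
    (hu0 : ∀ y, 0 ≤ u y) (hv0 : ∀ x, 0 < v x)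
    (p q p' : ℝ) (hp : 1 < p) (hpq : p ≤ q) (hp'def : p' = p / (p - 1))
    (hloc : ∃ M : ℝ, ∀ s : ℝ, 0 < s →
      (∫⁻ t in Ioo (0:ℝ) (1/s), (rearr ν u t) ^ q) ^ (1/q) *
      (∫⁻ t in Ioo (0:ℝ) s, (rearr μ (fun x => 1 / v x) t) ^ p') ^ (1/p')
        ≤ ENNReal.ofReal M)
    (hglo : ∃ M : ℝ, ∀ s : ℝ, 0 < s →
      (∫⁻ t in Ioi (1/s), (rearr ν u t) ^ q * ENNReal.ofReal (t ^ (-(q/a')))) ^ (1/q) *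
      (∫⁻ t in Ioi s, (rearr μ (fun x => 1 / v x) t) ^ p' *
          ENNReal.ofReal (t ^ (-(p'/a')))) ^ (1/p')
        ≤ ENNReal.ofReal M) :
    ∃ C : ℝ, 0 < C ∧ ∀ f : M₁ → ℂ, MemLp f 1 μ → MemLp f (ENNReal.ofReal a) μ →
      (∫⁻ y, (ENNReal.ofReal (u y) * (‖T f y‖₊ : ℝ≥0∞)) ^ q ∂ν) ^ (1/q)
        ≤ ENNReal.ofReal C * (∫⁻ x, (ENNReal.ofReal (v x) * (‖f x‖₊ : ℝ≥0∞)) ^ p ∂μ) ^ (1/p) := by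
  subst ha'def hp'def
  exact stmt2_general (A := A.toNNReal) (B := B.toNNReal) ⟨hsub, hweak, hstrong⟩
    (.conjExponent ha1) (.conjExponent hp) hpq hu hv.aemeasurable hu0 hv0 hloc hglo
end
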